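/- arXiv:math/9809021 — 5 statements merged into one kernel-verified Lean document; each statement's English description precedes it below -/
import Mathlib

section
/- Let H be a k-Hopf algebra with antipode S, A a left H-comodule algebra, and φ : H → A a left H-colinear map such that ρ_A(φ(h)) lies in the center of the tensor product algebra H⊗A for every h∈H. Then γ^φ : H → Hom_k(H,A), γ^φ(h)(g) = φ(h·S(g)), is an A-integral for the Doi-Hopf datum (H,A,H). Moreover, γ^φ is total if and only if φ(1_H) = 1_A. -/
/-!
Write `γ = γ^φ`, so `γ(c)(d) = φ(c S(d))`.

*Condition (a).* Applying the algebra map `ε ⊗ id` to the central element `ρ(φ(h))` shows that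
`φ(h)` is central in `A`. Since `S` reverses products,
`Σ φ(c h₁ S(d h₂)) = Σ φ(c h₁ S(h₂) S(d)) = ε(h) φ(c S(d))`; taking `h = a_{<-1>}` and using
coassociativity and counitality of `ρ` gives `a φ(c S(d)) = φ(c S(d)) a`.

*Condition (b).* By centrality and colinearity, the right-hand side is
`Σ ρ(φ(c S(d₁))) (d₂ ⊗ 1) = (id ⊗ φ)(Δ(c) · Σ Δ(S(d₁)) (d₂ ⊗ 1))`, and
`Σ Δ(S(d₁)) (d₂ ⊗ 1) = 1 ⊗ S(d)` (`sum_comul_antipode_mul`). The latter is an identity in the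
convolution algebra `Hom(H, H ⊗ H)`: with `i₁, i₂` the two inclusions `H → H ⊗ H`, one has
`Δ = i₁ * i₂`, while `Δ ∘ S` and `i₂ ∘ S` are the convolution inverses of `Δ` and `i₂`, so
`(Δ ∘ S) * i₁ = i₂ ∘ S`. This avoids the anti-comultiplicativity of `S`.

*Totality.* `Σ φ(c₁ S(c₂)) = ε(c) φ(1)`.
-/

open TensorProduct

noncomputable section

/-- A Doi-Hopf datum `(H, A, C)`: `H` is a `k`-bialgebra, `A` is a left `H`-comodule
algebra (with coaction `ρ`), and `C` is a right `H`-module coalgebra (with action `act`). -/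
structure DoiHopfDatum (k H A C : Type*) [CommRing k] [Ring H] [Bialgebra k H]
    [Ring A] [Algebra k A] [AddCommGroup C] [Module k C] [Coalgebra k C] where
  /-- the coaction `ρ_A : A → H ⊗ A`, `ρ a = Σ a_{<-1>} ⊗ a_{<0>}` -/
  ρ : A →ₗ[k] H ⊗[k] A
  ρ_coassoc : ∀ a : A,
    (TensorProduct.assoc k H H A)
        ((TensorProduct.map (Coalgebra.comul (R := k)) LinearMap.id) (ρ a))
      = (TensorProduct.map LinearMap.id ρ) (ρ a)
  ρ_counit : ∀ a : A,
    (TensorProduct.lid k A)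
        ((TensorProduct.map (Coalgebra.counit (R := k)) LinearMap.id) (ρ a)) = a
  ρ_mul : ∀ a b : A, ρ (a * b) = ρ a * ρ b
  ρ_one : ρ 1 = 1
  /-- the right `H`-action on `C`, written `act c h = c · h` -/
  act : C →ₗ[k] H →ₗ[k] C
  act_one : ∀ c : C, act c 1 = c
  act_mul : ∀ (c : C) (g h : H), act (act c g) h = act c (g * h)
  comul_act : ∀ (c : C) (h : H),
    Coalgebra.comul (R := k) (act c h)
      = (TensorProduct.map (TensorProduct.lift act) (TensorProduct.lift act))
          ((TensorProduct.tensorTensorTensorComm k C C H H)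
            (Coalgebra.comul (R := k) c ⊗ₜ[k] Coalgebra.comul (R := k) h))
  counit_act : ∀ (c : C) (h : H),
    Coalgebra.counit (R := k) (act c h)
      = Coalgebra.counit (R := k) c * Coalgebra.counit (R := k) h

namespace DoiHopfDatum

variable {k H A C : Type*} [CommRing k] [Ring H] [Bialgebra k H]
    [Ring A] [Algebra k A] [AddCommGroup C] [Module k C] [Coalgebra k C]
variable (D : DoiHopfDatum k H A C)

/-- The action `C ⊗ H → C` as a linear map on the tensor product. -/
def actL : C ⊗[k] H →ₗ[k] C := TensorProduct.lift D.act

/-- The iterated coaction `a ↦ Σ (a_{<-2>} ⊗ a_{<-1>}) ⊗ a_{<0>}`. -/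
def ρ2 : A →ₗ[k] (H ⊗[k] H) ⊗[k] A :=
  (TensorProduct.assoc k H H A).symm.toLinearMap ∘ₗ
    (TensorProduct.map LinearMap.id D.ρ) ∘ₗ D.ρ

/-- The simultaneous action of `H ⊗ H` on `C ⊗ C`. -/
def act2 : (C ⊗[k] C) ⊗[k] (H ⊗[k] H) →ₗ[k] C ⊗[k] C :=
  (TensorProduct.map D.actL D.actL) ∘ₗ
    (TensorProduct.tensorTensorTensorComm k C C H H).toLinearMap

/-- The right `A`-action on `C ⊗ A`: `(c ⊗ b) · a = Σ c·a_{<-1>} ⊗ b·a_{<0>}`. -/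
def rActCA : (C ⊗[k] A) ⊗[k] A →ₗ[k] C ⊗[k] A :=
  (TensorProduct.map D.actL (LinearMap.mul' k A)) ∘ₗ
    (TensorProduct.tensorTensorTensorComm k C A H A).toLinearMap ∘ₗ
    (TensorProduct.map LinearMap.id D.ρ)

/-- The right-hand side of condition (a) of `V₃`:
`(c ⊗ d) ⊗ a ↦ Σ a_{<0>} * θ(c·a_{<-2>} ⊗ d·a_{<-1>})`. -/
def V3aRHS (θ : C ⊗[k] C →ₗ[k] A) : (C ⊗[k] C) ⊗[k] A →ₗ[k] A :=
  (LinearMap.mul' k A) ∘ₗ (TensorProduct.comm k A A).toLinearMap ∘ₗ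
    (TensorProduct.map θ LinearMap.id) ∘ₗ
    (TensorProduct.map D.act2 LinearMap.id) ∘ₗ
    (TensorProduct.assoc k (C ⊗[k] C) (H ⊗[k] H) A).symm.toLinearMap ∘ₗ
    (TensorProduct.map LinearMap.id D.ρ2)

/-- The left-hand side of condition (b) of `V₃`: `c ⊗ d ↦ Σ c_(1) ⊗ θ(c_(2) ⊗ d)`. -/
def V3bLHS (_D : DoiHopfDatum k H A C) (θ : C ⊗[k] C →ₗ[k] A) : C ⊗[k] C →ₗ[k] C ⊗[k] A :=
  (TensorProduct.map LinearMap.id θ) ∘ₗ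
    (TensorProduct.assoc k C C C).toLinearMap ∘ₗ
    (TensorProduct.map (Coalgebra.comul (R := k)) LinearMap.id)

/-- The right-hand side of condition (b) of `V₃`:
`c ⊗ d ↦ Σ d_(2)·θ(c ⊗ d_(1))_{<-1>} ⊗ θ(c ⊗ d_(1))_{<0>}`. -/
def V3bRHS (θ : C ⊗[k] C →ₗ[k] A) : C ⊗[k] C →ₗ[k] C ⊗[k] A :=
  (TensorProduct.map D.actL LinearMap.id) ∘ₗ
    (TensorProduct.assoc k C H A).symm.toLinearMap ∘ₗ
    (TensorProduct.comm k (H ⊗[k] A) C).toLinearMap ∘ₗ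
    (TensorProduct.map D.ρ LinearMap.id) ∘ₗ
    (TensorProduct.map θ LinearMap.id) ∘ₗ
    (TensorProduct.assoc k C C C).symm.toLinearMap ∘ₗ
    (TensorProduct.map LinearMap.id (Coalgebra.comul (R := k)))

/-- `θ : C ⊗ C → A` belongs to `V₃`. -/
def IsV3 (θ : C ⊗[k] C →ₗ[k] A) : Prop :=
  (∀ (c d : C) (a : A), θ (c ⊗ₜ[k] d) * a = D.V3aRHS θ ((c ⊗ₜ[k] d) ⊗ₜ[k] a)) ∧
    D.V3bLHS θ = D.V3bRHS θ

/-- `θ` is normalized: `Σ θ(c_(1) ⊗ c_(2)) = ε(c)1_A`. -/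
def IsNormalizedV3 (_D : DoiHopfDatum k H A C) (θ : C ⊗[k] C →ₗ[k] A) : Prop :=
  ∀ c : C, θ (Coalgebra.comul (R := k) c)
    = algebraMap k A (Coalgebra.counit (R := k) c)

/-- An `A`-integral `γ : C → Hom(C,A)` for the Doi-Hopf datum: its uncurried form
lies in `V₃`. -/
def IsAIntegral (γ : C →ₗ[k] (C →ₗ[k] A)) : Prop :=
  D.IsV3 (TensorProduct.lift γ)

/-- A total `A`-integral: a normalized `A`-integral. -/
def IsTotalAIntegral (γ : C →ₗ[k] (C →ₗ[k] A)) : Prop :=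
  D.IsAIntegral γ ∧ D.IsNormalizedV3 (TensorProduct.lift γ)

end DoiHopfDatum

/-- A right-left Doi-Hopf module over the Doi-Hopf datum `D`: a right `A`-module and
left `C`-comodule `M` satisfying `ρ_M(m·a) = Σ m_{<-1>}·a_{<-1>} ⊗ m_{<0>}·a_{<0>}`. -/
structure DHModule {k H A C : Type*} [CommRing k] [Ring H] [Bialgebra k H]
    [Ring A] [Algebra k A] [AddCommGroup C] [Module k C] [Coalgebra k C]
    (D : DoiHopfDatum k H A C) (M : Type*) [AddCommGroup M] [Module k M] where
  /-- the right `A`-action on `M` -/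
  sm : M →ₗ[k] A →ₗ[k] M
  sm_one : ∀ m : M, sm m 1 = m
  sm_mul : ∀ (m : M) (a b : A), sm (sm m a) b = sm m (a * b)
  /-- the left `C`-coaction `ρ_M : M → C ⊗ M` -/
  cρ : M →ₗ[k] C ⊗[k] M
  cρ_coassoc : ∀ m : M,
    (TensorProduct.assoc k C C M)
        ((TensorProduct.map (Coalgebra.comul (R := k)) LinearMap.id) (cρ m))
      = (TensorProduct.map LinearMap.id cρ) (cρ m)
  cρ_counit : ∀ m : M,
    (TensorProduct.lid k M)
        ((TensorProduct.map (Coalgebra.counit (R := k)) LinearMap.id) (cρ m)) = m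
  compat : ∀ (m : M) (a : A),
    cρ (sm m a)
      = (TensorProduct.map D.actL (TensorProduct.lift sm))
          ((TensorProduct.tensorTensorTensorComm k C M H A)
            (cρ m ⊗ₜ[k] D.ρ a))

namespace DoiHopfDatum

variable {k H A C : Type*} [CommRing k] [Ring H] [Bialgebra k H]
    [Ring A] [Algebra k A] [AddCommGroup C] [Module k C] [Coalgebra k C]
variable (D : DoiHopfDatum k H A C)

/-- The natural transformation attached to `θ : C ⊗ C → A`:
`ν_M (c ⊗ m) = Σ m_{<0>} · θ(c ⊗ m_{<-1>})`. -/
def nuMap (θ : C ⊗[k] C →ₗ[k] A) {M : Type*} [AddCommGroup M] [Module k M]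
    (DM : DHModule D M) : C ⊗[k] M →ₗ[k] M :=
  (TensorProduct.lift DM.sm) ∘ₗ (TensorProduct.comm k A M).toLinearMap ∘ₗ
    (TensorProduct.map θ LinearMap.id) ∘ₗ
    (TensorProduct.assoc k C C M).symm.toLinearMap ∘ₗ
    (TensorProduct.map LinearMap.id DM.cρ)

/-- The right `A`-action on `C ⊗ M`: `(c ⊗ m) · a = Σ c·a_{<-1>} ⊗ m·a_{<0>}`. -/
def actCM {M : Type*} [AddCommGroup M] [Module k M] (DM : DHModule D M) :
    (C ⊗[k] M) ⊗[k] A →ₗ[k] C ⊗[k] M :=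
  (TensorProduct.map D.actL (TensorProduct.lift DM.sm)) ∘ₗ
    (TensorProduct.tensorTensorTensorComm k C M H A).toLinearMap ∘ₗ
    (TensorProduct.map LinearMap.id D.ρ)

end DoiHopfDatum

section MulDatum

variable {k H A : Type*} [CommRing k] [Ring H] [Bialgebra k H] [Ring A] [Algebra k A]

lemma mapMul_tensorTensorTensorComm (x y : H ⊗[k] H) :
    (TensorProduct.map (TensorProduct.lift (LinearMap.mul k H))
        (TensorProduct.lift (LinearMap.mul k H)))
      ((TensorProduct.tensorTensorTensorComm k H H H H) (x ⊗ₜ[k] y)) = x * y := by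
  induction x using TensorProduct.induction_on with
  | zero => simp
  | tmul a b =>
    induction y using TensorProduct.induction_on with
    | zero => simp
    | tmul c d => simp [Algebra.TensorProduct.tmul_mul_tmul]
    | add y₁ y₂ h₁ h₂ => simp only [tmul_add, map_add, h₁, h₂, mul_add]
  | add x₁ x₂ h₁ h₂ => simp only [add_tmul, map_add, h₁, h₂, add_mul]

/-- The Doi-Hopf datum `(H, A, H)`: `A` a left `H`-comodule algebra and `C = H` the
right `H`-module coalgebra given by multiplication. -/
def DoiHopfDatum.ofComodAlg (ρ : A →ₗ[k] H ⊗[k] A)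
    (ρ_coassoc : ∀ a : A,
      (TensorProduct.assoc k H H A)
          ((TensorProduct.map (Coalgebra.comul (R := k)) LinearMap.id) (ρ a))
        = (TensorProduct.map LinearMap.id ρ) (ρ a))
    (ρ_counit : ∀ a : A,
      (TensorProduct.lid k A)
          ((TensorProduct.map (Coalgebra.counit (R := k)) LinearMap.id) (ρ a)) = a)
    (ρ_mul : ∀ a b : A, ρ (a * b) = ρ a * ρ b)
    (ρ_one : ρ 1 = 1) : DoiHopfDatum k H A H where
  ρ := ρ
  ρ_coassoc := ρ_coassoc
  ρ_counit := ρ_counit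
  ρ_mul := ρ_mul
  ρ_one := ρ_one
  act := LinearMap.mul k H
  act_one := fun c => mul_one c
  act_mul := fun c g h => mul_assoc c g h
  comul_act := fun c h => by
    rw [mapMul_tensorTensorTensorComm]
    simp
  counit_act := fun c h => by simp

end MulDatum

section HopfGamma

variable {k H A : Type*} [CommRing k] [Ring H] [HopfAlgebra k H] [Ring A] [Algebra k A]

/-- The map `γ^φ : H → Hom(H,A)` attached to `φ : H → A` by
`γ^φ(h)(g) = φ(h·S(g))`, where `S` is the antipode. -/
def hopfGamma (φ : H →ₗ[k] A) : H →ₗ[k] (H →ₗ[k] A) :=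
  TensorProduct.curry (φ ∘ₗ (LinearMap.mul' k H) ∘ₗ
    (TensorProduct.map LinearMap.id (HopfAlgebra.antipode (R := k))))

end HopfGamma

open Coalgebra HopfAlgebra WithConv

section HopfIdentities

variable {k H A B : Type*} [CommRing k] [Ring H] [HopfAlgebra k H] [Ring A] [Algebra k A]
  [Ring B] [Algebra k B]

lemma convMul_antipode_left (f : H →ₐ[k] B) :
    toConv (f.toLinearMap ∘ₗ antipode k) * toConv f.toLinearMap = 1 := by
  have h := LinearMap.algHom_comp_convMul_distrib f
    (toConv (antipode k (A := H))) (toConv LinearMap.id)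
  rw [LinearMap.antipode_mul_id] at h
  apply WithConv.ofConv_injective
  refine h.symm.trans ?_
  ext x
  simp [LinearMap.convOne_def]

lemma convMul_antipode_right (f : H →ₐ[k] B) :
    toConv f.toLinearMap * toConv (f.toLinearMap ∘ₗ antipode k) = 1 := by
  have h := LinearMap.algHom_comp_convMul_distrib f
    (toConv LinearMap.id) (toConv (antipode k (A := H)))
  rw [LinearMap.id_mul_antipode] at h
  apply WithConv.ofConv_injective
  refine h.symm.trans ?_
  ext x
  simp [LinearMap.convOne_def]

/-- The comultiplication is the convolution product of the two inclusions `H → H ⊗ H`. -/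
lemma convMul_includes :
    toConv (Algebra.TensorProduct.includeLeft : H →ₐ[k] H ⊗[k] H).toLinearMap *
      toConv (Algebra.TensorProduct.includeRight : H →ₐ[k] H ⊗[k] H).toLinearMap =
    toConv (Bialgebra.comulAlgHom k H).toLinearMap := by
  ext x
  rw [(ℛ k x).convMul_apply]
  simp [(ℛ k x).eq]

/-- `Σ Δ(S(d₁)) (d₂ ⊗ 1) = 1 ⊗ S(d)`. -/
lemma sum_comul_antipode_mul (d : H) :
    ∑ i ∈ (ℛ k d).index,
      comul (R := k) (antipode k ((ℛ k d).left i)) * ((ℛ k d).right i ⊗ₜ[k] (1 : H)) =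
    (1 : H) ⊗ₜ[k] antipode k d := by
  have key : toConv ((Bialgebra.comulAlgHom k H).toLinearMap ∘ₗ antipode k) *
      toConv (Algebra.TensorProduct.includeLeft : H →ₐ[k] H ⊗[k] H).toLinearMap =
      toConv ((Algebra.TensorProduct.includeRight : H →ₐ[k] H ⊗[k] H).toLinearMap ∘ₗ
        antipode k) := by
    rw [← mul_one (_ * _), ← convMul_antipode_right
      (Algebra.TensorProduct.includeRight : H →ₐ[k] H ⊗[k] H), mul_assoc,
      ← mul_assoc (toConv (AlgHom.toLinearMap Algebra.TensorProduct.includeLeft)),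
      convMul_includes, ← mul_assoc, convMul_antipode_left, one_mul]
  have h := congrArg (fun f : WithConv (H →ₗ[k] H ⊗[k] H) => f d) key
  simpa [(ℛ k d).convMul_apply] using h

lemma lift_hopfGamma_tmul (φ : H →ₗ[k] A) (c d : H) :
    TensorProduct.lift (hopfGamma φ) (c ⊗ₜ[k] d) = φ (c * antipode k d) := by
  simp [hopfGamma]

/-- `Σ φ(c h₁ S(d h₂)) = ε(h) φ(c S(d))`. -/
lemma lift_hopfGamma_mul_comul (φ : H →ₗ[k] A) (c d h : H) :
    TensorProduct.lift (hopfGamma φ) ((c ⊗ₜ[k] d) * comul (R := k) h) =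
      counit (R := k) h • φ (c * antipode k d) := by
  have h1 : ∀ x y : H, c * x * antipode k (d * y) =
      c * (x * antipode k y) * antipode k d := fun x y => by
    rw [antipode_mul_antidistrib]; simp only [mul_assoc]
  rw [← (ℛ k h).eq]
  simp only [Finset.mul_sum, map_sum, Algebra.TensorProduct.tmul_mul_tmul, lift_hopfGamma_tmul, h1]
  rw [← map_sum, ← Finset.sum_mul, ← Finset.mul_sum, sum_mul_antipode_eq_smul]
  simp

/-- `ρ(φ(h))` central in `H ⊗ A` makes `φ(h) = (ε ⊗ id)(ρ(φ(h)))` central in `A`. -/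
lemma commute_of_coaction_central (ρ : A →ₗ[k] H ⊗[k] A)
    (ρ_counit : ∀ a : A,
      (TensorProduct.lid k A)
          ((TensorProduct.map (Coalgebra.counit (R := k)) LinearMap.id) (ρ a)) = a)
    (b : A) (hb : ρ b ∈ Set.center (H ⊗[k] A)) (a : A) : b * a = a * b := by
  have hc := (Set.mem_center_iff.mp hb).comm ((1 : H) ⊗ₜ[k] a)
  let e : H ⊗[k] A →ₐ[k] A := (Algebra.TensorProduct.lid k A).toAlgHom.comp
    (Algebra.TensorProduct.map (Bialgebra.counitAlgHom k H) (AlgHom.id k A))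
  have he : e (ρ b) = b := ρ_counit b
  have h := congrArg e hc.eq
  rw [map_mul, map_mul, he] at h
  simpa [e] using h

end HopfIdentities

/-- if `φ : H → A` is left `H`-colinear and `ρ_A(φ(h))` is central in the
algebra `H ⊗ A` for all `h`, then `γ^φ(h)(g) = φ(h·S(g))` is an `A`-integral for the
Doi-Hopf datum `(H,A,H)`; moreover `γ^φ` is total iff `φ(1_H) = 1_A`. -/
theorem central_colinear_gives_integral
    {k H A : Type*} [CommRing k] [Ring H] [HopfAlgebra k H]
    [Ring A] [Algebra k A]
    (ρ : A →ₗ[k] H ⊗[k] A)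
    (ρ_coassoc : ∀ a : A,
      (TensorProduct.assoc k H H A)
          ((TensorProduct.map (Coalgebra.comul (R := k)) LinearMap.id) (ρ a))
        = (TensorProduct.map LinearMap.id ρ) (ρ a))
    (ρ_counit : ∀ a : A,
      (TensorProduct.lid k A)
          ((TensorProduct.map (Coalgebra.counit (R := k)) LinearMap.id) (ρ a)) = a)
    (ρ_mul : ∀ a b : A, ρ (a * b) = ρ a * ρ b)
    (ρ_one : ρ 1 = 1)
    (φ : H →ₗ[k] A)
    (hφ : ∀ h : H, ρ (φ h)
      = (TensorProduct.map LinearMap.id φ) (Coalgebra.comul (R := k) h))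
    (hcent : ∀ h : H, ρ (φ h) ∈ Set.center (H ⊗[k] A)) :
    (DoiHopfDatum.ofComodAlg ρ ρ_coassoc ρ_counit ρ_mul ρ_one).IsAIntegral
        (hopfGamma φ) ∧
    ((DoiHopfDatum.ofComodAlg ρ ρ_coassoc ρ_counit ρ_mul ρ_one).IsNormalizedV3
        (TensorProduct.lift (hopfGamma φ)) ↔ φ 1 = 1) := by
  set D := DoiHopfDatum.ofComodAlg ρ ρ_coassoc ρ_counit ρ_mul ρ_one with hD
  refine ⟨⟨?_, ?_⟩, ?_⟩
  · intro c d a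
    have hact : ∀ x y : H ⊗[k] H, D.act2 (x ⊗ₜ[k] y) = x * y :=
      mapMul_tensorTensorTensorComm
    have hρ2 : D.ρ2 a = TensorProduct.map (comul (R := k)) LinearMap.id (ρ a) := by
      change (TensorProduct.assoc k H H A).symm (TensorProduct.map LinearMap.id ρ (ρ a)) = _
      rw [← ρ_coassoc, LinearEquiv.symm_apply_apply]
    -- `ρ a` is replaced by an arbitrary tensor so that pure tensors suffice.
    have key : ∀ t : H ⊗[k] A,
        LinearMap.mul' k A (TensorProduct.comm k A A
          (TensorProduct.map (TensorProduct.lift (hopfGamma φ)) LinearMap.id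
            (TensorProduct.map D.act2 LinearMap.id
              ((TensorProduct.assoc k (H ⊗[k] H) (H ⊗[k] H) A).symm
                ((c ⊗ₜ[k] d) ⊗ₜ[k]
                  TensorProduct.map (comul (R := k)) LinearMap.id t))))) =
        TensorProduct.lid k A (TensorProduct.map (counit (R := k)) LinearMap.id t) *
          φ (c * antipode k d) := by
      intro t
      induction t using TensorProduct.induction_on with
      | zero => simp
      | tmul h b =>
        simp only [TensorProduct.map_tmul, TensorProduct.assoc_symm_tmul, hact,
          lift_hopfGamma_mul_comul, TensorProduct.comm_tmul, LinearMap.mul'_apply,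
          LinearMap.id_apply, TensorProduct.lid_tmul, mul_smul_comm, smul_mul_assoc]
      | add x y hx hy => simp only [map_add, tmul_add, add_mul, hx, hy]
    rw [lift_hopfGamma_tmul, commute_of_coaction_central ρ ρ_counit _ (hcent _)]
    simp only [DoiHopfDatum.V3aRHS, LinearMap.comp_apply, LinearEquiv.coe_coe,
      TensorProduct.map_tmul, LinearMap.id_apply, hρ2]
    rw [key, ρ_counit]
  -- Both sides of (b) are rewritten as `(id ⊗ φ)(Δ(c) (1 ⊗ S(d)))`.
  · have hleft : ∀ (x : H ⊗[k] H) (d : H),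
        TensorProduct.map LinearMap.id (TensorProduct.lift (hopfGamma φ))
          (TensorProduct.assoc k H H H (x ⊗ₜ[k] d)) =
        TensorProduct.map LinearMap.id φ (x * ((1 : H) ⊗ₜ[k] antipode k d)) := by
      intro x d
      induction x using TensorProduct.induction_on with
      | zero => simp
      | tmul a b =>
        simp only [TensorProduct.assoc_tmul, TensorProduct.map_tmul, lift_hopfGamma_tmul,
          Algebra.TensorProduct.tmul_mul_tmul, mul_one, LinearMap.id_apply]
      | add x y hx hy => simp only [map_add, add_tmul, add_mul, hx, hy]
    have hright : ∀ (y : H ⊗[k] A) (g : H),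
        TensorProduct.map D.actL LinearMap.id
          ((TensorProduct.assoc k H H A).symm (g ⊗ₜ[k] y)) = (g ⊗ₜ[k] (1 : A)) * y := by
      intro y g
      induction y using TensorProduct.induction_on with
      | zero => simp
      | tmul a b =>
        simp [DoiHopfDatum.actL, hD, DoiHopfDatum.ofComodAlg]
      | add x y hx hy => simp only [map_add, tmul_add, mul_add, hx, hy]
    have hmap : ∀ (x : H ⊗[k] H) (g : H),
        TensorProduct.map LinearMap.id φ x * (g ⊗ₜ[k] (1 : A)) =
          TensorProduct.map LinearMap.id φ (x * (g ⊗ₜ[k] (1 : H))) := by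
      intro x g
      induction x using TensorProduct.induction_on with
      | zero => simp
      | tmul a b => simp
      | add x y hx hy => simp only [map_add, add_mul, hx, hy]
    have hcomm : ∀ (h g : H), (g ⊗ₜ[k] (1 : A)) * ρ (φ h) =
        TensorProduct.map LinearMap.id φ (comul (R := k) h * (g ⊗ₜ[k] (1 : H))) := by
      intro h g
      rw [← ((Set.mem_center_iff.mp (hcent h)).comm (g ⊗ₜ[k] (1 : A))).eq, hφ, hmap]
    have hDρ : D.ρ = ρ := rfl
    apply TensorProduct.ext'
    intro c d
    simp only [DoiHopfDatum.V3bLHS, DoiHopfDatum.V3bRHS, LinearMap.comp_apply,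
      LinearEquiv.coe_coe, TensorProduct.map_tmul, LinearMap.id_apply, hleft]
    conv_rhs => rw [← (ℛ k d).eq]
    simp only [tmul_sum, map_sum, TensorProduct.assoc_symm_tmul, TensorProduct.map_tmul,
      lift_hopfGamma_tmul, LinearMap.id_apply, TensorProduct.comm_tmul, hright, hDρ, hcomm,
      Bialgebra.comul_mul, mul_assoc]
    rw [← map_sum, ← Finset.mul_sum, sum_comul_antipode_mul]
  · have hnorm : ∀ c : H, TensorProduct.lift (hopfGamma φ) (comul (R := k) c) =
        counit (R := k) c • φ 1 := by
      intro c
      simpa [← Algebra.TensorProduct.one_def] using lift_hopfGamma_mul_comul φ 1 1 c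
    simp only [DoiHopfDatum.IsNormalizedV3, hnorm]
    constructor
    · intro h
      simpa using h 1
    · intro h c
      rw [h, Algebra.algebraMap_eq_smul_one]
end
end

section
/- Let H be a k-Hopf algebra with antipode S, projective as a k-module, A a left H-comodule algebra, and φ : H → A a left H-colinear map. If the map γ^φ : H → Hom_k(H,A), γ^φ(h)(g) = φ(h·S(g)), is an A-integral for the Doi-Hopf datum (H,A,H), then ρ_A(φ(h)) lies in the center of the tensor product algebra H⊗A for every h∈H; in particular φ(H) ⊆ Z(A). -/
/-!
Write `θ(c ⊗ d) = φ(c S(d))`.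

Condition (a) at `d = 1` reads `φ(c) a = Σ a_{<0>} φ(c a_{<-2>} S(a_{<-1>}))`, and by coassociativity
of the coaction and the antipode axiom the right-hand side is `a φ(c)`; so `φ` has central values.

Condition (b) evaluated at `Σ c d_(1) ⊗ d_(2)` reads
`Σ c_(1) d_(1) ⊗ φ(c_(2) d_(2) S(d_(3))) = Σ (d_(3) ⊗ 1) ρ(φ(c d_(1) S(d_(2))))`.
The antipode axiom collapses both sides, giving `ρ(φ c) (d ⊗ 1) = (d ⊗ 1) ρ(φ c)`
(`integral_lhs_collapse`, `integral_rhs_collapse`).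
Together with centrality of `φ(H)`, this shows that `ρ(φ c) = Σ c_(1) ⊗ φ(c_(2))` commutes with
every `d ⊗ a = (d ⊗ 1) (1 ⊗ a)`.
-/


open TensorProduct

noncomputable section

section Collapse

variable {k H A : Type*} [CommRing k] [Ring H] [HopfAlgebra k H] [Ring A] [Algebra k A]

/-- The map `x ⊗ y ↦ x S(y)` appearing in the antipode axiom. -/
def mulAntipode (k H : Type*) [CommRing k] [Ring H] [HopfAlgebra k H] : H ⊗[k] H →ₗ[k] H :=
  LinearMap.mul' k H ∘ₗ TensorProduct.map LinearMap.id (HopfAlgebra.antipode (R := k))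

lemma mulAntipode_tmul (x y : H) :
    mulAntipode k H (x ⊗ₜ[k] y) = x * HopfAlgebra.antipode k y := by
  simp [mulAntipode]

lemma mulAntipode_comul (x : H) :
    mulAntipode k H (Coalgebra.comul (R := k) x)
      = algebraMap k H (Coalgebra.counit (R := k) x) := by
  simpa [mulAntipode, LinearMap.lTensor] using
    HopfAlgebra.mul_antipode_lTensor_comul_apply (R := k) x

lemma hopfGamma_apply (φ : H →ₗ[k] A) (x y : H) :
    hopfGamma φ x y = φ (x * HopfAlgebra.antipode k y) := by
  simp [hopfGamma]

/-- `Σ d_(1) ⊗ d_(2) S(d_(3)) = d ⊗ 1`. -/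
lemma map_id_mulAntipode_assoc (d : H) :
    TensorProduct.map LinearMap.id (mulAntipode k H)
      (TensorProduct.assoc k H H H (TensorProduct.map (Coalgebra.comul (R := k)) LinearMap.id
        (Coalgebra.comul (R := k) d))) = d ⊗ₜ[k] 1 := by
  have h := Coalgebra.coassoc_apply (R := k) d
  rw [LinearMap.rTensor] at h
  rw [h]
  have key : ∀ t : H ⊗[k] H, TensorProduct.map LinearMap.id (mulAntipode k H)
      (LinearMap.lTensor H (Coalgebra.comul (R := k)) t)
      = TensorProduct.map LinearMap.id (Algebra.linearMap k H)
        (LinearMap.lTensor H (Coalgebra.counit (R := k)) t) := by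
    intro t
    induction t using TensorProduct.induction_on with
    | zero => simp
    | tmul x y => simp [mulAntipode_comul]
    | add x y hx hy => simp only [map_add, hx, hy]
  rw [key, Coalgebra.lTensor_counit_comul]
  simp

/-- `Σ d_(1) S(d_(2)) ⊗ d_(3) = 1 ⊗ d`. -/
lemma map_mulAntipode_id_assoc_symm (d : H) :
    TensorProduct.map (mulAntipode k H) LinearMap.id
      ((TensorProduct.assoc k H H H).symm (TensorProduct.map LinearMap.id
        (Coalgebra.comul (R := k)) (Coalgebra.comul (R := k) d))) = 1 ⊗ₜ[k] d := by
  have h := Coalgebra.coassoc_symm_apply (R := k) d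
  rw [LinearMap.lTensor] at h
  rw [h]
  have key : ∀ t : H ⊗[k] H, TensorProduct.map (mulAntipode k H) LinearMap.id
      (LinearMap.rTensor H (Coalgebra.comul (R := k)) t)
      = TensorProduct.map (Algebra.linearMap k H) LinearMap.id
        (LinearMap.rTensor H (Coalgebra.counit (R := k)) t) := by
    intro t
    induction t using TensorProduct.induction_on with
    | zero => simp
    | tmul x y => simp [mulAntipode_comul]
    | add x y hx hy => simp only [map_add, hx, hy]
  rw [key, Coalgebra.rTensor_counit_comul]
  simp

/-- The left-hand side of condition (b) at `Σ c d_(1) ⊗ d_(2)` collapses to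
`Σ c_(1) d ⊗ φ(c_(2))`. -/
lemma integral_lhs_collapse (D : DoiHopfDatum k H A H) (φ : H →ₗ[k] A) (c d : H) :
    D.V3bLHS (TensorProduct.lift (hopfGamma φ))
        (TensorProduct.map (LinearMap.mulLeft k c) LinearMap.id (Coalgebra.comul (R := k) d))
      = TensorProduct.map LinearMap.id φ (Coalgebra.comul (R := k) c) * (d ⊗ₜ[k] 1) := by
  -- `Δ(c)` is replaced by an arbitrary tensor `w`, so that it may be taken pure.
  have gen : ∀ w : H ⊗[k] H, ∀ t : H ⊗[k] H,
      TensorProduct.map LinearMap.id (TensorProduct.lift (hopfGamma φ))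
        (TensorProduct.assoc k H H H (TensorProduct.map
          (LinearMap.mulLeft k w ∘ₗ Coalgebra.comul (R := k)) LinearMap.id t))
      = TensorProduct.map LinearMap.id φ
          (w * TensorProduct.map LinearMap.id (mulAntipode k H)
            (TensorProduct.assoc k H H H
              (TensorProduct.map (Coalgebra.comul (R := k)) LinearMap.id t))) := by
    intro w t
    induction t using TensorProduct.induction_on with
    | zero => simp
    | add x y hx hy => simp only [map_add, mul_add, hx, hy]
    | tmul x y =>
      simp only [TensorProduct.map_tmul, LinearMap.comp_apply, LinearMap.mulLeft_apply,
        LinearMap.id_apply]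
      generalize Coalgebra.comul (R := k) x = u
      induction u using TensorProduct.induction_on with
      | zero => simp
      | add u v hu hv => simp only [mul_add, add_tmul, map_add, hu, hv]
      | tmul u v =>
        induction w using TensorProduct.induction_on with
        | zero => simp
        | add p q hp hq => simp only [add_mul, add_tmul, map_add, hp, hq]
        | tmul p q =>
          simp [hopfGamma_apply, mulAntipode_tmul, Algebra.TensorProduct.tmul_mul_tmul,
            mul_assoc]
  have h1 := gen (Coalgebra.comul (R := k) c) (Coalgebra.comul (R := k) d)
  rw [map_id_mulAntipode_assoc] at h1
  have h2 : ∀ w : H ⊗[k] H,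
      TensorProduct.map LinearMap.id φ (w * (d ⊗ₜ[k] 1))
        = TensorProduct.map LinearMap.id φ w * (d ⊗ₜ[k] 1) := by
    intro w
    induction w using TensorProduct.induction_on with
    | zero => simp
    | add p q hp hq => simp only [add_mul, map_add, hp, hq]
    | tmul p q => simp [Algebra.TensorProduct.tmul_mul_tmul]
  rw [← h2]
  refine Eq.trans ?_ h1
  have h3 : (Coalgebra.comul (R := k) : H →ₗ[k] H ⊗[k] H) ∘ₗ LinearMap.mulLeft k c
      = LinearMap.mulLeft k (Coalgebra.comul (R := k) c) ∘ₗ Coalgebra.comul (R := k) := by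
    ext x
    simp
  rw [← h3]
  simp only [DoiHopfDatum.V3bLHS, LinearMap.comp_apply, LinearEquiv.coe_coe,
    TensorProduct.map_map, LinearMap.comp_id]

/-- The right-hand side of condition (b) at `Σ c d_(1) ⊗ d_(2)` collapses to `(d ⊗ 1) ρ(φ c)`. -/
lemma integral_rhs_collapse (D : DoiHopfDatum k H A H) (hD : D.act = LinearMap.mul k H)
    (φ : H →ₗ[k] A) (c d : H) :
    D.V3bRHS (TensorProduct.lift (hopfGamma φ))
        (TensorProduct.map (LinearMap.mulLeft k c) LinearMap.id (Coalgebra.comul (R := k) d))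
      = (d ⊗ₜ[k] 1) * D.ρ (φ c) := by
  have act : ∀ (z : H) (r : H ⊗[k] A), TensorProduct.map D.actL LinearMap.id
      ((TensorProduct.assoc k H H A).symm (z ⊗ₜ[k] r)) = (z ⊗ₜ[k] 1) * r := by
    intro z r
    induction r using TensorProduct.induction_on with
    | zero => simp
    | add p q hp hq => simp only [tmul_add, mul_add, map_add, hp, hq]
    | tmul p q =>
      simp [DoiHopfDatum.actL, hD, Algebra.TensorProduct.tmul_mul_tmul]
  -- `x ⊗ z ↦ (z ⊗ 1) ρ(φ(c x))`
  let G : H ⊗[k] H →ₗ[k] H ⊗[k] A :=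
    TensorProduct.map D.actL LinearMap.id ∘ₗ (TensorProduct.assoc k H H A).symm.toLinearMap ∘ₗ
      (TensorProduct.comm k (H ⊗[k] A) H).toLinearMap ∘ₗ
      TensorProduct.map (D.ρ ∘ₗ φ ∘ₗ LinearMap.mulLeft k c) LinearMap.id
  have gen : ∀ t : H ⊗[k] H,
      D.V3bRHS (TensorProduct.lift (hopfGamma φ))
        (TensorProduct.map (LinearMap.mulLeft k c) LinearMap.id t)
      = G (TensorProduct.map (mulAntipode k H) LinearMap.id
      ((TensorProduct.assoc k H H H).symm (TensorProduct.map LinearMap.id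
        (Coalgebra.comul (R := k)) t))) := by
    intro t
    induction t using TensorProduct.induction_on with
    | zero => simp
    | add x y hx hy => simp only [map_add, hx, hy]
    | tmul x y =>
      simp only [DoiHopfDatum.V3bRHS, LinearMap.comp_apply, TensorProduct.map_tmul,
        LinearMap.id_apply, LinearMap.mulLeft_apply]
      generalize Coalgebra.comul (R := k) y = u
      induction u using TensorProduct.induction_on with
      | zero => simp
      | add u v hu hv => simp only [tmul_add, map_add, hu, hv]
      | tmul u v =>
        simp [G, hopfGamma_apply, mulAntipode_tmul, mul_assoc]
  rw [gen, map_mulAntipode_id_assoc_symm]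
  simp [G, act]

/-- Condition (a) at `d = 1`: its right-hand side collapses to `a φ(c)`. -/
lemma integral_a_collapse (D : DoiHopfDatum k H A H) (hD : D.act = LinearMap.mul k H)
    (φ : H →ₗ[k] A) (c : H) (a : A) :
    D.V3aRHS (TensorProduct.lift (hopfGamma φ)) ((c ⊗ₜ[k] 1) ⊗ₜ[k] a) = a * φ c := by
  have hρ2 : D.ρ2 a = TensorProduct.map (Coalgebra.comul (R := k)) LinearMap.id (D.ρ a) := by
    simp only [DoiHopfDatum.ρ2, LinearMap.comp_apply, ← D.ρ_coassoc a]
    simp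
  have gen : ∀ r : H ⊗[k] A,
      LinearMap.mul' k A (TensorProduct.comm k A A
        (TensorProduct.map (TensorProduct.lift (hopfGamma φ)) LinearMap.id
          (TensorProduct.map D.act2 LinearMap.id
            ((TensorProduct.assoc k (H ⊗[k] H) (H ⊗[k] H) A).symm ((c ⊗ₜ[k] 1) ⊗ₜ[k]
              TensorProduct.map (Coalgebra.comul (R := k)) LinearMap.id r)))))
      = TensorProduct.lid k A (TensorProduct.map (Coalgebra.counit (R := k)) LinearMap.id r)
          * φ c := by
    intro r
    induction r using TensorProduct.induction_on with
    | zero => simp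
    | add x y hx hy => simp only [map_add, tmul_add, add_mul, hx, hy]
    | tmul x b =>
      have conv : ∀ u : H ⊗[k] H,
          TensorProduct.lift (hopfGamma φ) (D.act2 ((c ⊗ₜ[k] 1) ⊗ₜ[k] u))
            = φ (c * mulAntipode k H u) := by
        intro u
        induction u using TensorProduct.induction_on with
        | zero => simp
        | add u v hu hv => simp only [tmul_add, map_add, mul_add, hu, hv]
        | tmul u v =>
          simp [DoiHopfDatum.act2, DoiHopfDatum.actL, hD, hopfGamma_apply,
            mulAntipode_tmul, mul_assoc]
      simp only [TensorProduct.map_tmul, TensorProduct.assoc_symm_tmul, conv, mulAntipode_comul,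
        LinearMap.id_apply, TensorProduct.comm_tmul, LinearMap.mul'_apply,
        TensorProduct.lid_tmul, Algebra.algebraMap_eq_smul_one, mul_smul_comm, mul_one,
        map_smul, smul_mul_assoc]
  have h := gen (D.ρ a)
  rw [D.ρ_counit, ← hρ2] at h
  rw [← h]
  simp [DoiHopfDatum.V3aRHS]

end Collapse

/-- if `H` is `k`-projective, `φ : H → A` is left `H`-colinear and
`γ^φ(h)(g) = φ(h·S(g))` is an `A`-integral for `(H,A,H)`, then `ρ_A(φ(h))` is central in
`H ⊗ A` for every `h`; in particular `φ(H) ⊆ Z(A)`. -/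
theorem integral_implies_central
    {k H A : Type*} [CommRing k] [Ring H] [HopfAlgebra k H]
    [Ring A] [Algebra k A] [Module.Projective k H]
    (ρ : A →ₗ[k] H ⊗[k] A)
    (ρ_coassoc : ∀ a : A,
      (TensorProduct.assoc k H H A)
          ((TensorProduct.map (Coalgebra.comul (R := k)) LinearMap.id) (ρ a))
        = (TensorProduct.map LinearMap.id ρ) (ρ a))
    (ρ_counit : ∀ a : A,
      (TensorProduct.lid k A)
          ((TensorProduct.map (Coalgebra.counit (R := k)) LinearMap.id) (ρ a)) = a)
    (ρ_mul : ∀ a b : A, ρ (a * b) = ρ a * ρ b)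
    (ρ_one : ρ 1 = 1)
    (φ : H →ₗ[k] A)
    (hφ : ∀ h : H, ρ (φ h)
      = (TensorProduct.map LinearMap.id φ) (Coalgebra.comul (R := k) h))
    (hint : (DoiHopfDatum.ofComodAlg ρ ρ_coassoc ρ_counit ρ_mul ρ_one).IsAIntegral
      (hopfGamma φ)) :
    (∀ h : H, ρ (φ h) ∈ Set.center (H ⊗[k] A)) ∧
    (∀ h : H, φ h ∈ Set.center A) := by
  set D := DoiHopfDatum.ofComodAlg ρ ρ_coassoc ρ_counit ρ_mul ρ_one with hDdef
  have hD : D.act = LinearMap.mul k H := rfl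
  have hDρ : D.ρ = ρ := rfl
  obtain ⟨ha, hb⟩ := hint
  have hcomm : ∀ (h : H) (a : A), φ h * a = a * φ h := by
    intro h a
    have h1 := ha h 1 a
    rw [integral_a_collapse D hD, TensorProduct.lift.tmul, hopfGamma_apply] at h1
    simpa using h1
  have hleft : ∀ h g : H, ρ (φ h) * (g ⊗ₜ[k] 1) = (g ⊗ₜ[k] 1) * ρ (φ h) := by
    intro h g
    have h1 := integral_lhs_collapse D φ h g
    rw [hb, integral_rhs_collapse D hD, hDρ, ← hφ] at h1
    exact h1.symm
  have hright : ∀ (h : H) (a : A), ρ (φ h) * (1 ⊗ₜ[k] a) = (1 ⊗ₜ[k] a) * ρ (φ h) := by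
    intro h a
    rw [hφ]
    generalize Coalgebra.comul (R := k) h = w
    induction w using TensorProduct.induction_on with
    | zero => simp
    | add p q hp hq => simp only [add_mul, mul_add, map_add, hp, hq]
    | tmul p q => simp [Algebra.TensorProduct.tmul_mul_tmul, hcomm]
  refine ⟨fun h => ?_, fun h => ?_⟩
  · rw [Semigroup.mem_center_iff]
    intro x
    induction x using TensorProduct.induction_on with
    | zero => simp
    | add p q hp hq => simp only [add_mul, mul_add, hp, hq]
    | tmul g a =>
      have hsplit : g ⊗ₜ[k] a = (g ⊗ₜ[k] (1 : A)) * ((1 : H) ⊗ₜ[k] a) := by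
        simp [Algebra.TensorProduct.tmul_mul_tmul]
      rw [hsplit, mul_assoc, ← hright, ← mul_assoc, ← hleft, mul_assoc]
  · rw [Semigroup.mem_center_iff]
    exact fun a => (hcomm h a).symm
end
end

section
/- Let H be a k-Hopf algebra with antipode S, A a left H-comodule algebra, and φ : H → A a left H-colinear map such that φ(gh) = φ(h·S²(g)) for all g,h∈H and φ(H) ⊆ Z(A). Then ρ_A(φ(h)) lies in the center of the tensor product algebra H⊗A for every h∈H, and consequently γ^φ(h)(g) = φ(h·S(g)) defines an A-integral for the Doi-Hopf datum (H,A,H). -/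
/-!
The twisted trace condition `φ(gh) = φ(h S²(g))` makes `φ` invariant under the adjoint action:
`∑ φ(g₁ h S(g₂)) = ∑ φ(h S(S(g₁) g₂)) = ε(g) φ(h)` (`adjoint_invariant`).  Applying `ρ` and using
colinearity together with `Δ(S g) = ∑ S(g₂) ⊗ S(g₁)` gives
`∑ g₁ h₁ S(g₄) ⊗ φ(g₂ h₂ S(g₃)) = ε(g) ∑ h₁ ⊗ φ(h₂)`; invariance in the second tensor factor
collapses the left side to `∑ g₁ h₁ S(g₂) ⊗ φ(h₂)`.  Multiplying on the right by a further
component of `g` yields `∑ g h₁ ⊗ φ(h₂) = ∑ h₁ g ⊗ φ(h₂)` (`idMap_comul_comm`).  Since `φ` takes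
central values, `ρ(φ h)` is central in `H ⊗ A`.  No bijectivity of `S` is involved.

Condition (a) for `γ^φ` is `∑ a_{<0>} φ(c a_{<-2>} S(a_{<-1>}) S(d)) = φ(c S(d)) a`, by
coassociativity, the antipode axiom and centrality of the values of `φ`.  For (b), centrality moves
`d₂` to the right of `ρ(φ(c S(d₁)))`, and then `∑ c₁ S(d₂) d₃ ⊗ φ(c₂ S(d₁)) = ∑ c₁ ⊗ φ(c₂ S(d))`.

Calculations with iterated coproducts are carried out in the convolution algebra
`Hom(H, H ⊗ H)`, where with `i₁(g) = g ⊗ 1` and `i₂(g) = 1 ⊗ g` one has `Δ = i₁ * i₂` and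
`Δ ∘ S = (i₂ ∘ S) * (i₁ ∘ S)`.
-/


open TensorProduct

noncomputable section

namespace TwistedIntegral

open Coalgebra HopfAlgebra WithConv

section Conv

variable {k H : Type*} [CommRing k] [Ring H] [HopfAlgebra k H]

/-- `i₁ : H → H ⊗ H`, `g ↦ g ⊗ 1`. -/
def inl : H →ₐ[k] H ⊗[k] H := Algebra.TensorProduct.includeLeft

/-- `i₂ : H → H ⊗ H`, `g ↦ 1 ⊗ g`. -/
def inr : H →ₐ[k] H ⊗[k] H := Algebra.TensorProduct.includeRight

/-- An algebra map out of `H`, as an element of the convolution algebra `Hom(H, B)`. -/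
def cv {B : Type*} [Ring B] [Algebra k B] (i : H →ₐ[k] B) : WithConv (H →ₗ[k] B) :=
  toConv i.toLinearMap

/-- `i ∘ S` as an element of the convolution algebra `Hom(H, B)`. -/
def cvS {B : Type*} [Ring B] [Algebra k B] (i : H →ₐ[k] B) : WithConv (H →ₗ[k] B) :=
  toConv (i.toLinearMap ∘ₗ antipode k)

/-- The element `g ↦ ε(g) z` of the convolution algebra `Hom(H, B)`; convolving with it multiplies
values by `z`. -/
def cst {B : Type*} [Ring B] [Algebra k B] (z : B) : WithConv (H →ₗ[k] B) :=
  toConv (LinearMap.toSpanSingleton k B z ∘ₗ counit)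

variable {B : Type*} [Ring B] [Algebra k B]

lemma cvS_mul_cv (i : H →ₐ[k] B) : cvS i * cv i = 1 := by
  ext c
  rw [(ℛ k c).convMul_apply]
  simp [cv, cvS, ← map_mul, ← map_sum, sum_antipode_mul_eq_algebraMap_counit (ℛ k c)]

lemma cv_mul_cvS (i : H →ₐ[k] B) : cv i * cvS i = 1 := by
  ext c
  rw [(ℛ k c).convMul_apply]
  simp [cv, cvS, ← map_mul, ← map_sum, sum_mul_antipode_eq_algebraMap_counit (ℛ k c)]

lemma cst_mul_apply (z : B) (f : WithConv (H →ₗ[k] B)) (c : H) :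
    (cst z * f).ofConv c = z * f c := by
  rw [(ℛ k c).convMul_apply]
  simp only [cst, ofConv_toConv, LinearMap.comp_apply, LinearMap.toSpanSingleton_apply,
    smul_mul_assoc, ← mul_smul_comm]
  rw [← Finset.mul_sum]
  congr 1
  conv_rhs => rw [← sum_counit_smul (ℛ k c)]
  simp only [map_sum, map_smul]

lemma mul_cst_apply (z : B) (f : WithConv (H →ₗ[k] B)) (c : H) :
    (f * cst z).ofConv c = f c * z := by
  rw [(ℛ k c).convMul_apply]
  simp only [cst, ofConv_toConv, LinearMap.comp_apply, LinearMap.toSpanSingleton_apply,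
    mul_smul_comm, ← smul_mul_assoc]
  rw [← Finset.sum_mul]
  congr 1
  have h : ∑ i ∈ (ℛ k c).index, counit (R := k) ((ℛ k c).right i) • (ℛ k c).left i = c := by
    have := congrArg (TensorProduct.rid k H) (sum_tmul_counit_eq (R := k) (ℛ k c))
    simpa only [map_sum, TensorProduct.rid_tmul, one_smul] using this
  conv_rhs => rw [← h]
  simp only [map_sum, map_smul]

lemma cv_comul : cv (Bialgebra.comulAlgHom k H) = cv inl * cv inr := by
  ext c
  rw [(ℛ k c).convMul_apply]
  simp [cv, inl, inr, (ℛ k c).eq]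

/-- Anticomultiplicativity of the antipode, `Δ(S g) = S(g₂) ⊗ S(g₁)`: both sides are convolution
inverse to `Δ = i₁ * i₂`. -/
lemma cvS_comul : cvS (Bialgebra.comulAlgHom k H) = cvS inr * cvS inl := by
  symm
  apply left_inv_eq_right_inv (a := cv (Bialgebra.comulAlgHom k H))
  · rw [cv_comul, mul_assoc, ← mul_assoc (cvS inl), cvS_mul_cv, one_mul, cvS_mul_cv]
  · exact cv_mul_cvS _

end Conv

section Invariance

variable {k H A : Type*} [CommRing k] [Ring H] [HopfAlgebra k H] [Ring A] [Algebra k A]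

/-- `F = id ⊗ φ : H ⊗ H → H ⊗ A`. -/
def idMap (φ : H →ₗ[k] A) : H ⊗[k] H →ₗ[k] H ⊗[k] A := TensorProduct.map LinearMap.id φ

lemma idMap_inl_mul (φ : H →ₗ[k] A) (u : H) (z : H ⊗[k] H) :
    idMap φ (inl (k := k) u * z) = (u ⊗ₜ[k] 1) * idMap φ z := by
  induction z using TensorProduct.induction_on with
  | zero => simp
  | tmul a b => simp [idMap, inl]
  | add x y hx hy => simp only [mul_add, map_add, hx, hy]

lemma idMap_mul_inl (φ : H →ₗ[k] A) (u : H) (z : H ⊗[k] H) :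
    idMap φ (z * inl (k := k) u) = idMap φ z * (u ⊗ₜ[k] 1) := by
  induction z using TensorProduct.induction_on with
  | zero => simp
  | tmul a b => simp [idMap, inl]
  | add x y hx hy => simp only [add_mul, map_add, hx, hy]

/-- `F = id ⊗ φ` is linear over `i₁(H)` on the left, so equality after applying `F` survives
convolution on the left with a map into `i₁(H)`. -/
lemma idMap_conv_left (φ : H →ₗ[k] A) (s : H →ₗ[k] H) {Y Y' : WithConv (H →ₗ[k] H ⊗[k] H)}
    (h : ∀ c, idMap φ (Y c) = idMap φ (Y' c)) (c : H) :
    idMap φ ((toConv ((inl (k := k) (H := H)).toLinearMap ∘ₗ s) * Y) c) =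
      idMap φ ((toConv ((inl (k := k) (H := H)).toLinearMap ∘ₗ s) * Y') c) := by
  rw [(ℛ k c).convMul_apply, (ℛ k c).convMul_apply]
  simp [idMap_inl_mul, h]

/-- The right-hand version of `idMap_conv_left`. -/
lemma idMap_conv_right (φ : H →ₗ[k] A) (s : H →ₗ[k] H) {Y Y' : WithConv (H →ₗ[k] H ⊗[k] H)}
    (h : ∀ c, idMap φ (Y c) = idMap φ (Y' c)) (c : H) :
    idMap φ ((Y * toConv ((inl (k := k) (H := H)).toLinearMap ∘ₗ s)) c) =
      idMap φ ((Y' * toConv ((inl (k := k) (H := H)).toLinearMap ∘ₗ s)) c) := by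
  rw [(ℛ k c).convMul_apply, (ℛ k c).convMul_apply]
  simp [idMap_mul_inl, h]

/-- The twisted trace condition makes `φ` invariant under the adjoint action:
`φ(g₁ h S(g₂)) = φ(h S(g₂) S²(g₁)) = φ(h S(S(g₁) g₂)) = ε(g) φ(h)`. -/
lemma adjoint_invariant (φ : H →ₗ[k] A)
    (htw : ∀ g h : H, φ (g * h) = φ (h * antipode k (antipode k g))) (g h : H) :
    ∑ i ∈ (ℛ k g).index, φ ((ℛ k g).left i * h * antipode k ((ℛ k g).right i)) =
      counit (R := k) g • φ h := by
  have h1 : ∀ i, φ ((ℛ k g).left i * h * antipode k ((ℛ k g).right i)) =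
      φ (h * antipode k (antipode k ((ℛ k g).left i) * (ℛ k g).right i)) := fun i => by
    rw [mul_assoc, htw, antipode_mul_antidistrib, mul_assoc]
  simp only [h1]
  rw [← map_sum, ← Finset.mul_sum, ← map_sum, sum_antipode_mul_eq_smul]
  simp

/-- The centrality of `ρ(φ h)` in the `H`-direction: `∑ x h₁ ⊗ φ(h₂) = ∑ h₁ x ⊗ φ(h₂)`. -/
lemma idMap_comul_comm (φ : H →ₗ[k] A) (ρ : A →ₗ[k] H ⊗[k] A)
    (hφ : ∀ h : H, ρ (φ h) = idMap φ (comul (R := k) h))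
    (htw : ∀ g h : H, φ (g * h) = φ (h * antipode k (antipode k g))) (x h : H) :
    (x ⊗ₜ[k] 1) * idMap φ (comul (R := k) h) = idMap φ (comul (R := k) h) * (x ⊗ₜ[k] 1) := by
  set Z : WithConv (H →ₗ[k] H ⊗[k] H) := cst (comul (R := k) h) with hZ
  have hZa : ∀ c, Z c = counit (R := k) c • comul (R := k) h := fun c => rfl
  -- Invariance of `φ` in the second tensor factor.
  have h2 : ∀ c, idMap φ ((cv inr * (Z * cvS inr)).ofConv c) = idMap φ (Z c) := fun c => by
    rw [(ℛ k c).convMul_apply, hZa]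
    simp only [hZ, cst_mul_apply, map_sum, map_smul]
    simp only [cv, cvS, ofConv_toConv, LinearMap.comp_apply, AlgHom.toLinearMap_apply]
    generalize comul (R := k) h = w
    induction w using TensorProduct.induction_on with
    | zero => simp
    | tmul a b =>
      simp only [inr, Algebra.TensorProduct.includeRight_apply,
        Algebra.TensorProduct.tmul_mul_tmul, one_mul, mul_one, idMap, TensorProduct.map_tmul,
        LinearMap.id_apply, ← mul_assoc]
      rw [← TensorProduct.tmul_sum, adjoint_invariant φ htw, TensorProduct.tmul_smul]
    | add a b ha hb =>
      simp only [mul_add, add_mul, map_add, smul_add, Finset.sum_add_distrib, ha, hb]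
  -- Invariance of `φ`, transported through `ρ ∘ φ = F ∘ Δ`.
  have h1 : ∀ c, idMap φ ((cv (Bialgebra.comulAlgHom k H) *
      (Z * cvS (Bialgebra.comulAlgHom k H))).ofConv c) = idMap φ (Z c) := fun c => by
    rw [(ℛ k c).convMul_apply, hZa, map_smul, ← hφ, ← map_smul, ← adjoint_invariant φ htw]
    simp only [hZ, cst_mul_apply, map_sum, hφ]
    simp [cv, cvS, mul_assoc]
  rw [cv_comul, cvS_comul] at h1
  have h3 : ∀ c, idMap φ ((cv inl * (Z * cvS inl)).ofConv c) = idMap φ (Z c) := fun c => by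
    rw [← h1 c]
    have e : cv inl * cv inr * (Z * (cvS inr * cvS inl)) =
      cv inl * ((cv inr * (Z * cvS inr)) * cvS inl) := by simp only [mul_assoc]
    rw [e]
    exact (idMap_conv_left φ LinearMap.id (idMap_conv_right φ (antipode k) h2) c).symm
  -- Convolving on the right with `i₁` cancels `i₁ ∘ S`.
  have h4 := idMap_conv_right φ LinearMap.id h3 x
  change idMap φ ((cv inl * (Z * cvS inl) * cv inl).ofConv x) = idMap φ ((Z * cv inl).ofConv x) at h4
  rw [mul_assoc, mul_assoc, cvS_mul_cv, mul_one, mul_cst_apply, cst_mul_apply] at h4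
  simpa [cv, idMap_inl_mul, idMap_mul_inl] using h4

lemma idMap_comul_mem_center (φ : H →ₗ[k] A) (ρ : A →ₗ[k] H ⊗[k] A)
    (hφ : ∀ h : H, ρ (φ h) = idMap φ (comul (R := k) h))
    (htw : ∀ g h : H, φ (g * h) = φ (h * antipode k (antipode k g)))
    (hZ : ∀ h : H, φ h ∈ Set.center A) (h : H) (z : H ⊗[k] A) :
    idMap φ (comul (R := k) h) * z = z * idMap φ (comul (R := k) h) := by
  have hA : ∀ (a : A) (w : H ⊗[k] H), idMap φ w * (1 ⊗ₜ[k] a) = (1 ⊗ₜ[k] a) * idMap φ w := by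
    intro a w
    induction w using TensorProduct.induction_on with
    | zero => simp
    | tmul x y => simp [idMap, ((Set.mem_center_iff.1 (hZ y)).comm a).eq]
    | add x y hx hy => simp only [map_add, add_mul, mul_add, hx, hy]
  induction z using TensorProduct.induction_on with
  | zero => simp
  | tmul x a =>
    have e : x ⊗ₜ[k] a = (x ⊗ₜ[k] (1 : A)) * ((1 : H) ⊗ₜ[k] a) := by simp
    rw [e, ← mul_assoc, ← idMap_comul_comm φ ρ hφ htw, mul_assoc, hA, mul_assoc]
  | add x y hx hy => rw [mul_add, add_mul, hx, hy]

/-- `∑ (c S(d₁))₁ d₂ ⊗ φ((c S(d₁))₂) = ∑ c₁ ⊗ φ(c₂ S(d))`. -/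
lemma idMap_comul_antipode_mul (φ : H →ₗ[k] A) (c d : H) :
    ∑ i ∈ (ℛ k d).index, idMap φ (comul (R := k) (c * antipode k ((ℛ k d).left i))) *
        ((ℛ k d).right i ⊗ₜ[k] 1) =
      idMap φ (comul (R := k) c * (1 ⊗ₜ[k] antipode k d)) := by
  have e : cst (comul (R := k) c) * cvS (Bialgebra.comulAlgHom k H) * cv inl =
      cst (comul (R := k) c) * cvS inr := by
    rw [cvS_comul, mul_assoc, mul_assoc, cvS_mul_cv, mul_one]
  have := congrArg (fun f => idMap φ (f.ofConv d)) e
  rw [cst_mul_apply, (ℛ k d).convMul_apply] at this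
  simp only [cst_mul_apply, map_sum] at this
  simp only [cv, cvS, ofConv_toConv, LinearMap.comp_apply, AlgHom.toLinearMap_apply,
    idMap_mul_inl, Bialgebra.comulAlgHom_apply, ← Bialgebra.comul_mul] at this
  simpa [inr] using this

end Invariance

end TwistedIntegral

/-- if `φ : H → A` is left `H`-colinear, `φ(gh) = φ(h·S²(g))` for all
`g, h`, and `φ(H) ⊆ Z(A)`, then `ρ_A(φ(h))` is central in `H ⊗ A` for every `h`, and
consequently `γ^φ(h)(g) = φ(h·S(g))` is an `A`-integral for `(H,A,H)`. -/
theorem twisted_commutative_gives_integral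
    {k H A : Type*} [CommRing k] [Ring H] [HopfAlgebra k H]
    [Ring A] [Algebra k A]
    (ρ : A →ₗ[k] H ⊗[k] A)
    (ρ_coassoc : ∀ a : A,
      (TensorProduct.assoc k H H A)
          ((TensorProduct.map (Coalgebra.comul (R := k)) LinearMap.id) (ρ a))
        = (TensorProduct.map LinearMap.id ρ) (ρ a))
    (ρ_counit : ∀ a : A,
      (TensorProduct.lid k A)
          ((TensorProduct.map (Coalgebra.counit (R := k)) LinearMap.id) (ρ a)) = a)
    (ρ_mul : ∀ a b : A, ρ (a * b) = ρ a * ρ b)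
    (ρ_one : ρ 1 = 1)
    (φ : H →ₗ[k] A)
    (hφ : ∀ h : H, ρ (φ h)
      = (TensorProduct.map LinearMap.id φ) (Coalgebra.comul (R := k) h))
    (htw : ∀ g h : H, φ (g * h)
      = φ (h * HopfAlgebra.antipode (R := k) (HopfAlgebra.antipode (R := k) g)))
    (hZ : ∀ h : H, φ h ∈ Set.center A) :
    (∀ h : H, ρ (φ h) ∈ Set.center (H ⊗[k] A)) ∧
    (DoiHopfDatum.ofComodAlg ρ ρ_coassoc ρ_counit ρ_mul ρ_one).IsAIntegral
      (hopfGamma φ) := by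
  have hφ' : ∀ h : H, ρ (φ h) = TwistedIntegral.idMap φ (Coalgebra.comul (R := k) h) := hφ
  have hc := TwistedIntegral.idMap_comul_mem_center φ ρ hφ' htw hZ
  have hγ : ∀ c d : H, TensorProduct.lift (hopfGamma φ) (c ⊗ₜ[k] d) =
      φ (c * HopfAlgebra.antipode (R := k) d) := fun c d => by simp [hopfGamma]
  refine ⟨fun h => ?_, fun c d a => ?_, ?_⟩
  · rw [Semigroup.mem_center_iff]
    intro z
    rw [hφ', hc]
  · have h2 : (DoiHopfDatum.ofComodAlg ρ ρ_coassoc ρ_counit ρ_mul ρ_one).ρ2 a =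
        TensorProduct.map (Coalgebra.comul (R := k)) LinearMap.id (ρ a) := by
      simp [DoiHopfDatum.ρ2, DoiHopfDatum.ofComodAlg, ← ρ_coassoc]
    have key : ∀ w : H ⊗[k] A,
        LinearMap.mul' k A (TensorProduct.comm k A A
          (TensorProduct.map (TensorProduct.lift (hopfGamma φ)) LinearMap.id
          (TensorProduct.map
            (DoiHopfDatum.ofComodAlg ρ ρ_coassoc ρ_counit ρ_mul ρ_one).act2 LinearMap.id
          ((TensorProduct.assoc k (H ⊗[k] H) (H ⊗[k] H) A).symm ((c ⊗ₜ[k] d) ⊗ₜ[k]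
            TensorProduct.map (Coalgebra.comul (R := k)) LinearMap.id w))))) =
        φ (c * HopfAlgebra.antipode (R := k) d) *
          TensorProduct.lid k A (TensorProduct.map (Coalgebra.counit (R := k)) LinearMap.id w) := by
      intro w
      induction w using TensorProduct.induction_on with
      | zero => simp
      | add x y hx hy => simp only [map_add, tmul_add, mul_add, hx, hy]
      | tmul x b =>
        have hs : ∑ i ∈ (Coalgebra.Repr.arbitrary k x).index,
            φ (c * (Coalgebra.Repr.arbitrary k x).left i * HopfAlgebra.antipode (R := k)
              (d * (Coalgebra.Repr.arbitrary k x).right i)) =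
            Coalgebra.counit (R := k) x • φ (c * HopfAlgebra.antipode (R := k) d) := by
          have e : ∀ i, c * (Coalgebra.Repr.arbitrary k x).left i * HopfAlgebra.antipode (R := k)
              (d * (Coalgebra.Repr.arbitrary k x).right i) =
              c * ((Coalgebra.Repr.arbitrary k x).left i * HopfAlgebra.antipode (R := k)
                ((Coalgebra.Repr.arbitrary k x).right i)) * HopfAlgebra.antipode (R := k) d :=
            fun i => by rw [HopfAlgebra.antipode_mul_antidistrib]; simp only [mul_assoc]
          simp only [e]
          rw [← map_sum, ← Finset.sum_mul, ← Finset.mul_sum, HopfAlgebra.sum_mul_antipode_eq_smul]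
          simp
        rw [TensorProduct.map_tmul, ← (Coalgebra.Repr.arbitrary k x).eq]
        simp only [TensorProduct.sum_tmul, TensorProduct.tmul_sum, map_sum,
          TensorProduct.assoc_symm_tmul, TensorProduct.map_tmul, TensorProduct.comm_tmul,
          LinearMap.mul'_apply, LinearMap.id_apply, TensorProduct.lid_tmul]
        have ha : ∀ y z : H, (DoiHopfDatum.ofComodAlg ρ ρ_coassoc ρ_counit ρ_mul ρ_one).act2
            ((c ⊗ₜ[k] d) ⊗ₜ[k] (y ⊗ₜ[k] z)) = (c * y) ⊗ₜ[k] (d * z) := fun y z => by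
          simp [DoiHopfDatum.act2, DoiHopfDatum.actL, DoiHopfDatum.ofComodAlg]
        simp only [ha, hγ]
        rw [← Finset.mul_sum, hs, mul_smul_comm, mul_smul_comm,
          ((Set.mem_center_iff.1 (hZ (c * HopfAlgebra.antipode (R := k) d))).comm b).eq]
    have hk := key (ρ a)
    rw [ρ_counit, ← h2] at hk
    rw [hγ, ← hk]
    simp [DoiHopfDatum.V3aRHS]
  · refine TensorProduct.ext' fun c d => ?_
    have hL : ∀ w : H ⊗[k] H, TensorProduct.map LinearMap.id (TensorProduct.lift (hopfGamma φ))
        (TensorProduct.assoc k H H H (w ⊗ₜ[k] d)) =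
        TwistedIntegral.idMap φ (w * (1 ⊗ₜ[k] HopfAlgebra.antipode (R := k) d)) := fun w => by
      induction w using TensorProduct.induction_on with
      | zero => simp
      | tmul x y => simp [TwistedIntegral.idMap, hopfGamma]
      | add x y hx hy => simp only [add_tmul, map_add, add_mul, hx, hy]
    have hR : ∀ (x : H) (w : H ⊗[k] A),
        TensorProduct.map (DoiHopfDatum.ofComodAlg ρ ρ_coassoc ρ_counit ρ_mul ρ_one).actL
          LinearMap.id ((TensorProduct.assoc k H H A).symm (x ⊗ₜ[k] w)) =
        (x ⊗ₜ[k] 1) * w := fun x w => by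
      induction w using TensorProduct.induction_on with
      | zero => simp
      | tmul y b => simp [DoiHopfDatum.actL, DoiHopfDatum.ofComodAlg]
      | add y z hy hz => simp only [tmul_add, map_add, mul_add, hy, hz]
    trans TwistedIntegral.idMap φ
      (Coalgebra.comul (R := k) c * (1 ⊗ₜ[k] HopfAlgebra.antipode (R := k) d))
    · simp only [DoiHopfDatum.V3bLHS, LinearMap.comp_apply, TensorProduct.map_tmul,
        LinearEquiv.coe_coe, LinearMap.id_apply, hL]
    · rw [← TwistedIntegral.idMap_comul_antipode_mul]
      simp only [DoiHopfDatum.V3bRHS, LinearMap.comp_apply, TensorProduct.map_tmul,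
        LinearEquiv.coe_coe, LinearMap.id_apply]
      conv_rhs => rw [← (Coalgebra.Repr.arbitrary k d).eq]
      simp only [TensorProduct.tmul_sum, map_sum, TensorProduct.assoc_symm_tmul,
        TensorProduct.map_tmul, TensorProduct.comm_tmul, LinearMap.id_apply, hγ, hR]
      refine Finset.sum_congr rfl fun i _ => ?_
      -- `ρ(φ(c S(d₁)))` is central, so `d₂` can be moved to its left.
      rw [hc]
      congr 1
      exact (hφ' _).symm
end
end

section
/- Let H be a k-Hopf algebra, A a left H-comodule algebra, and B = A^{coH} = {a∈A : ρ_A(a) = 1_H⊗a} the subalgebra of coinvariants. (1) If e = Σ_i e¹_i ⊗_B e²_i ∈ A⊗_B A is a separability idempotent for the ring extension B ⊆ A (i.e. Σ_i a·e¹_i ⊗_B e²_i = Σ_i e¹_i ⊗_B e²_i·a for all a∈A and Σ_i e¹_i e²_i = 1_A), then z = Σ_i (e²_i)_{<-1>} ⊗ e¹_i·(e²_i)_{<0>} ∈ H⊗A is a normalized dual A-integral for the Doi-Hopf datum (H,A,H): for all a∈A, Σ_i (e²_i)_{<-1>} ⊗ a·e¹_i·(e²_i)_{<0>} = Σ_i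 (e²_i)_{<-1>}·a_{<-1>} ⊗ e¹_i·(e²_i)_{<0>}·a_{<0>}, and (ε⊗id_A)(z) = 1_A. (2) Conversely, if the map δ' : A⊗_B A → H⊗A, a⊗_B b ↦ Σ b_{<-1>} ⊗ a·b_{<0>}, is bijective (A/B is an H-Galois extension) and z ∈ H⊗A is a normalized dual A-integral, then δ'^{-1}(z) is a separability idempotent for B ⊆ A. -/
/-!
Everything takes place in the algebra `H ⊗ A`, where `δ'(x ⊗ y) = (1 ⊗ x) ρ(y)`. There, `z` is a
dual `A`-integral exactly when `(1 ⊗ a) z = z ρ(a)` for all `a` (`isDualIntegralH_iff`). The map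
`δ'` carries left multiplication by `a` on `A ⊗_B A` to left multiplication by `1 ⊗ a`
(`deltaQ_lmulQ`), right multiplication by `a` to right multiplication by `ρ(a)`
(`deltaQ_rmulQ`), and satisfies `(ε ⊗ id) ∘ δ' = mult` (`counit_deltaQ`). Hence `δ'` maps
separability idempotents to normalized dual integrals, and the converse holds as soon as `δ'` is
bijective.
-/

open TensorProduct

noncomputable section

section Galois

variable {k H A : Type*} [CommRing k] [Ring H] [HopfAlgebra k H] [Ring A] [Algebra k A]

/-- The submodule of `A ⊗ A` of relations defining `A ⊗_B A`, where
`B = A^{coH}` is the subalgebra of coinvariants. -/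
def coinvRel (ρ : A →ₗ[k] H ⊗[k] A) : Submodule k (A ⊗[k] A) :=
  Submodule.span k {x | ∃ a b c : A, ρ b = (1 : H) ⊗ₜ[k] b ∧
    x = (a * b) ⊗ₜ[k] c - a ⊗ₜ[k] (b * c)}

/-- The map `δ' : A ⊗ A → H ⊗ A`, `a ⊗ b ↦ Σ b_{<-1>} ⊗ a·b_{<0>}`. -/
def deltaMap (ρ : A →ₗ[k] H ⊗[k] A) : A ⊗[k] A →ₗ[k] H ⊗[k] A :=
  (TensorProduct.map LinearMap.id (LinearMap.mul' k A)) ∘ₗ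
    (TensorProduct.assoc k H A A).toLinearMap ∘ₗ
    (TensorProduct.map (TensorProduct.comm k A H).toLinearMap LinearMap.id) ∘ₗ
    (TensorProduct.assoc k A H A).symm.toLinearMap ∘ₗ
    (TensorProduct.map LinearMap.id ρ)

/-- The multiplication `A ⊗_B A → A` induced on the quotient. -/
def mulQ (ρ : A →ₗ[k] H ⊗[k] A) : ((A ⊗[k] A) ⧸ coinvRel ρ) →ₗ[k] A :=
  Submodule.liftQ _ (LinearMap.mul' k A) (by
    rw [coinvRel, Submodule.span_le]
    rintro x ⟨a, b, c, hb, rfl⟩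
    simp [SetLike.mem_coe, LinearMap.mem_ker, mul_assoc])

/-- Left multiplication `a·(x ⊗_B y) = (a·x) ⊗_B y` on `A ⊗_B A`. -/
def lmulQ (ρ : A →ₗ[k] H ⊗[k] A) (d : A) :
    ((A ⊗[k] A) ⧸ coinvRel ρ) →ₗ[k] ((A ⊗[k] A) ⧸ coinvRel ρ) :=
  Submodule.mapQ _ _ (TensorProduct.map (LinearMap.mulLeft k d) LinearMap.id) (by
    rw [coinvRel, Submodule.span_le]
    rintro x ⟨a, b, c, hb, rfl⟩
    rw [SetLike.mem_coe, Submodule.mem_comap]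
    exact Submodule.subset_span ⟨d * a, b, c, hb, by simp [mul_assoc]⟩)

/-- Right multiplication `(x ⊗_B y)·a = x ⊗_B (y·a)` on `A ⊗_B A`. -/
def rmulQ (ρ : A →ₗ[k] H ⊗[k] A) (d : A) :
    ((A ⊗[k] A) ⧸ coinvRel ρ) →ₗ[k] ((A ⊗[k] A) ⧸ coinvRel ρ) :=
  Submodule.mapQ _ _ (TensorProduct.map LinearMap.id (LinearMap.mulRight k d)) (by
    rw [coinvRel, Submodule.span_le]
    rintro x ⟨a, b, c, hb, rfl⟩
    rw [SetLike.mem_coe, Submodule.mem_comap]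
    exact Submodule.subset_span ⟨a, b, c * d, hb, by simp [mul_assoc]⟩)

set_option synthInstance.maxHeartbeats 1000000 in
set_option maxHeartbeats 1000000 in
/-- The map `δ' : A ⊗_B A → H ⊗ A` induced on the quotient. -/
def deltaQ (ρ : A →ₗ[k] H ⊗[k] A) (hρ_mul : ∀ a b : A, ρ (a * b) = ρ a * ρ b) :
    ((A ⊗[k] A) ⧸ coinvRel ρ) →ₗ[k] H ⊗[k] A :=
  Submodule.liftQ _ (deltaMap ρ) (by
    rw [coinvRel, Submodule.span_le]
    rintro x ⟨a, b, c, hb, rfl⟩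
    rw [SetLike.mem_coe, LinearMap.mem_ker, map_sub, sub_eq_zero]
    have key : ∀ (x : A) (w : H ⊗[k] A),
        (TensorProduct.map LinearMap.id (LinearMap.mul' k A))
          ((TensorProduct.assoc k H A A)
            ((TensorProduct.map (TensorProduct.comm k A H).toLinearMap LinearMap.id)
              ((TensorProduct.assoc k A H A).symm (x ⊗ₜ[k] w))))
          = (TensorProduct.map LinearMap.id (LinearMap.mulLeft k x)) w := by
      intro x w
      induction w using TensorProduct.induction_on with
      | zero => simp
      | tmul h y => simp
      | add w₁ w₂ h₁ h₂ => simp only [tmul_add, map_add, h₁, h₂]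
    have hd : ∀ x y : A, deltaMap ρ (x ⊗ₜ[k] y)
        = (TensorProduct.map LinearMap.id (LinearMap.mulLeft k x)) (ρ y) := by
      intro x y
      simp only [deltaMap, LinearMap.comp_apply, TensorProduct.map_tmul,
        LinearMap.id_coe, id_eq, LinearEquiv.coe_coe]
      exact key x (ρ y)
    have key2 : ∀ w : H ⊗[k] A,
        (TensorProduct.map LinearMap.id (LinearMap.mulLeft k a)) (((1 : H) ⊗ₜ[k] b) * w)
          = (TensorProduct.map LinearMap.id (LinearMap.mulLeft k (a * b))) w := by
      intro w
      induction w using TensorProduct.induction_on with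
      | zero => simp
      | tmul h y => simp [Algebra.TensorProduct.tmul_mul_tmul, mul_assoc]
      | add w₁ w₂ h₁ h₂ => simp only [mul_add, map_add, h₁, h₂]
    rw [hd, hd, hρ_mul b c, hb, key2])

/-- `z ∈ H ⊗ A` is a dual `A`-integral for the Doi-Hopf datum `(H,A,H)`:
`Σ_j h_j ⊗ a·a_j = Σ_j h_j·a_{<-1>} ⊗ a_j·a_{<0>}` for all `a ∈ A`. -/
def IsDualIntegralH (ρ : A →ₗ[k] H ⊗[k] A) (z : H ⊗[k] A) : Prop :=
  ∀ a : A, (TensorProduct.map LinearMap.id (LinearMap.mulLeft k a)) z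
    = (TensorProduct.map (LinearMap.mul' k H) (LinearMap.mul' k A))
        ((TensorProduct.tensorTensorTensorComm k H A H A) (z ⊗ₜ[k] ρ a))

end Galois

section GaloisLemmas

variable {k H A : Type*} [CommRing k] [Ring H] [HopfAlgebra k H] [Ring A] [Algebra k A]

lemma map_mul_tensorComm_eq_mul (z w : H ⊗[k] A) :
    (TensorProduct.map (LinearMap.mul' k H) (LinearMap.mul' k A))
        ((TensorProduct.tensorTensorTensorComm k H A H A) (z ⊗ₜ[k] w)) = z * w := by
  induction z using TensorProduct.induction_on with
  | zero => simp
  | add z₁ z₂ h₁ h₂ => simp only [add_tmul, map_add, h₁, h₂, add_mul]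
  | tmul h a =>
    induction w using TensorProduct.induction_on with
    | zero => simp
    | add w₁ w₂ h₁ h₂ => simp only [tmul_add, map_add, h₁, h₂, mul_add]
    | tmul g b => simp

lemma map_id_mulLeft_eq_mul (x : A) (w : H ⊗[k] A) :
    (TensorProduct.map LinearMap.id (LinearMap.mulLeft k x)) w = ((1 : H) ⊗ₜ[k] x) * w := by
  induction w using TensorProduct.induction_on with
  | zero => simp
  | tmul h y => simp
  | add w₁ w₂ h₁ h₂ => simp only [mul_add, map_add, h₁, h₂]

/-- In the algebra `H ⊗ A`, `δ'(x ⊗ y) = (1 ⊗ x) ρ(y)`. -/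
lemma deltaMap_tmul (ρ : A →ₗ[k] H ⊗[k] A) (x y : A) :
    deltaMap ρ (x ⊗ₜ[k] y) = ((1 : H) ⊗ₜ[k] x) * ρ y := by
  simp only [deltaMap, LinearMap.comp_apply, TensorProduct.map_tmul,
    LinearMap.id_coe, id_eq, LinearEquiv.coe_coe]
  generalize ρ y = w
  induction w using TensorProduct.induction_on with
  | zero => simp
  | tmul h y => simp
  | add w₁ w₂ h₁ h₂ => simp only [tmul_add, map_add, h₁, h₂, mul_add]

lemma deltaQ_lmulQ (ρ : A →ₗ[k] H ⊗[k] A) (ρ_mul : ∀ a b : A, ρ (a * b) = ρ a * ρ b)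
    (a : A) (e : (A ⊗[k] A) ⧸ coinvRel ρ) :
    deltaQ ρ ρ_mul (lmulQ ρ a e) = ((1 : H) ⊗ₜ[k] a) * deltaQ ρ ρ_mul e := by
  obtain ⟨t, rfl⟩ := Submodule.Quotient.mk_surjective _ e
  change deltaMap ρ (TensorProduct.map (LinearMap.mulLeft k a) LinearMap.id t)
    = ((1 : H) ⊗ₜ[k] a) * deltaMap ρ t
  induction t using TensorProduct.induction_on with
  | zero => simp
  | tmul x y => simp [deltaMap_tmul, ← mul_assoc]
  | add t₁ t₂ h₁ h₂ => simp only [mul_add, map_add, h₁, h₂]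

/-- Multiplicativity of `ρ` turns right multiplication by `a` on `A ⊗_B A` into right
multiplication by `ρ a` on `H ⊗ A`. -/
lemma deltaQ_rmulQ (ρ : A →ₗ[k] H ⊗[k] A) (ρ_mul : ∀ a b : A, ρ (a * b) = ρ a * ρ b)
    (a : A) (e : (A ⊗[k] A) ⧸ coinvRel ρ) :
    deltaQ ρ ρ_mul (rmulQ ρ a e) = deltaQ ρ ρ_mul e * ρ a := by
  obtain ⟨t, rfl⟩ := Submodule.Quotient.mk_surjective _ e
  change deltaMap ρ (TensorProduct.map LinearMap.id (LinearMap.mulRight k a) t)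
    = deltaMap ρ t * ρ a
  induction t using TensorProduct.induction_on with
  | zero => simp
  | tmul x y => simp [deltaMap_tmul, ρ_mul, mul_assoc]
  | add t₁ t₂ h₁ h₂ => simp only [add_mul, map_add, h₁, h₂]

/-- `(ε ⊗ id) ∘ δ'` is the multiplication `A ⊗_B A → A`; this is the counit axiom for `ρ`. -/
lemma counit_deltaQ (ρ : A →ₗ[k] H ⊗[k] A)
    (ρ_counit : ∀ a : A,
      (TensorProduct.lid k A)
          ((TensorProduct.map (Coalgebra.counit (R := k)) LinearMap.id) (ρ a)) = a)
    (ρ_mul : ∀ a b : A, ρ (a * b) = ρ a * ρ b) (e : (A ⊗[k] A) ⧸ coinvRel ρ) :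
    (TensorProduct.lid k A)
      ((TensorProduct.map (Coalgebra.counit (R := k)) LinearMap.id) (deltaQ ρ ρ_mul e))
      = mulQ ρ e := by
  obtain ⟨t, rfl⟩ := Submodule.Quotient.mk_surjective _ e
  change (TensorProduct.lid k A)
      ((TensorProduct.map (Coalgebra.counit (R := k)) LinearMap.id) (deltaMap ρ t))
      = LinearMap.mul' k A t
  have key : ∀ (x : A) (w : H ⊗[k] A),
      (TensorProduct.lid k A) ((TensorProduct.map (Coalgebra.counit (R := k)) LinearMap.id)
          (((1 : H) ⊗ₜ[k] x) * w))
        = x * (TensorProduct.lid k A)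
          ((TensorProduct.map (Coalgebra.counit (R := k)) LinearMap.id) w) := by
    intro x w
    induction w using TensorProduct.induction_on with
    | zero => simp
    | tmul h y => simp
    | add w₁ w₂ h₁ h₂ => simp only [mul_add, map_add, h₁, h₂]
  induction t using TensorProduct.induction_on with
  | zero => simp
  | tmul x y => rw [deltaMap_tmul, key, ρ_counit, LinearMap.mul'_apply]
  | add t₁ t₂ h₁ h₂ => simp only [map_add, h₁, h₂]

lemma isDualIntegralH_iff (ρ : A →ₗ[k] H ⊗[k] A) (z : H ⊗[k] A) :
    IsDualIntegralH ρ z ↔ ∀ a : A, ((1 : H) ⊗ₜ[k] a) * z = z * ρ a := by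
  simp only [IsDualIntegralH, map_mul_tensorComm_eq_mul, map_id_mulLeft_eq_mul]

end GaloisLemmas

/-- let `B = A^{coH}` be the coinvariants of the left `H`-comodule algebra
`A`. (1) If `e ∈ A ⊗_B A` is a separability idempotent for `B ⊆ A`, then
`z = δ'(e) = Σ_i (e²_i)_{<-1>} ⊗ e¹_i·(e²_i)_{<0>}` is a normalized dual `A`-integral for
the Doi-Hopf datum `(H,A,H)`. (2) Conversely, if `δ' : A ⊗_B A → H ⊗ A` is bijective
(`A/B` is `H`-Galois) and `z` is a normalized dual `A`-integral, then `δ'⁻¹(z)` is a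
separability idempotent for `B ⊆ A`. -/
theorem separability_idempotent_dual_integral
    {k H A : Type*} [CommRing k] [Ring H] [HopfAlgebra k H] [Ring A] [Algebra k A]
    (ρ : A →ₗ[k] H ⊗[k] A)
    (ρ_coassoc : ∀ a : A,
      (TensorProduct.assoc k H H A)
          ((TensorProduct.map (Coalgebra.comul (R := k)) LinearMap.id) (ρ a))
        = (TensorProduct.map LinearMap.id ρ) (ρ a))
    (ρ_counit : ∀ a : A,
      (TensorProduct.lid k A)
          ((TensorProduct.map (Coalgebra.counit (R := k)) LinearMap.id) (ρ a)) = a)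
    (ρ_mul : ∀ a b : A, ρ (a * b) = ρ a * ρ b)
    (ρ_one : ρ 1 = 1) :
    (∀ e : (A ⊗[k] A) ⧸ coinvRel ρ,
      (∀ a : A, lmulQ ρ a e = rmulQ ρ a e) → mulQ ρ e = 1 →
        IsDualIntegralH ρ (deltaQ ρ ρ_mul e) ∧
        (TensorProduct.lid k A)
          ((TensorProduct.map (Coalgebra.counit (R := k)) LinearMap.id)
            (deltaQ ρ ρ_mul e)) = 1) ∧
    (Function.Bijective (deltaQ ρ ρ_mul) →
      ∀ z : H ⊗[k] A, IsDualIntegralH ρ z →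
        (TensorProduct.lid k A)
          ((TensorProduct.map (Coalgebra.counit (R := k)) LinearMap.id) z) = 1 →
        ∃ e : (A ⊗[k] A) ⧸ coinvRel ρ, deltaQ ρ ρ_mul e = z ∧
          (∀ a : A, lmulQ ρ a e = rmulQ ρ a e) ∧ mulQ ρ e = 1) := by
  refine ⟨fun e he h1 => ⟨?_, ?_⟩, fun hbij z hz h1 => ?_⟩
  · rw [isDualIntegralH_iff]
    intro a
    rw [← deltaQ_lmulQ, he, deltaQ_rmulQ]
  · rw [counit_deltaQ ρ ρ_counit, h1]
  · obtain ⟨e, rfl⟩ := hbij.2 z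
    rw [isDualIntegralH_iff] at hz
    refine ⟨e, rfl, fun a => hbij.1 ?_, ?_⟩
    · rw [deltaQ_lmulQ, deltaQ_rmulQ, hz]
    · rw [← counit_deltaQ ρ ρ_counit ρ_mul, h1]
end
end

section
/- Let G be a group, X a right G-set, A a G-graded k-algebra, and let M = ⊕_{x∈X} M_x and N = ⊕_{x∈X} N_x be X-graded right A-modules. Let u : M → N be a right A-linear map with u(M_x) ⊆ N_x for all x∈X. (1) If u has a right A-linear retraction, then u has a right A-linear retraction v with v(N_x) ⊆ M_x for all x∈X. (2) If u has a right A-linear section, then u has a right A-linear section v with v(N_x) ⊆ M_x for all x∈X. -/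
/-!
The graded retraction or section is the degree-preserving part of the given one. If `v : N → M` is
`k`-linear, let `w` act on `N_x` as `p_x ∘ v`, where `p_x : M → M` is the projection onto `M_x`
(`exists_proj`, `exists_glue`). Right translation by `g` is injective on `X`, so
`p_{x·g} (m a) = (p_x m) a` for every `m : M` and `a ∈ A_g` (`proj_smul`); hence `w` is right
`A`-linear whenever `v` is (`gradedPart_smul`). Since `u` commutes with the projections, `v ∘ u = id`
gives `w ∘ u = id`, and `u ∘ v = id` gives `u ∘ w = id`. All these identities are checked on
homogeneous elements (`ext_of_isInternal`).
-/

/-- Linear maps out of an internal direct sum are equal once they agree on homogeneous elements. -/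
theorem ext_of_isInternal {k ι M P : Type*} [CommRing k] [DecidableEq ι]
    [AddCommGroup M] [Module k M] [AddCommGroup P] [Module k P]
    {ℳ : ι → Submodule k M} (hdec : DirectSum.IsInternal ℳ) {f g : M →ₗ[k] P}
    (h : ∀ x, ∀ m ∈ ℳ x, f m = g m) : f = g := by
  ext m
  have hm : m ∈ ⨆ i, ℳ i := by
    rw [hdec.submodule_iSup_eq_top]
    trivial
  induction hm using Submodule.iSup_induction' with
  | mem i x hx => exact h i x hx
  | zero => simp
  | add x y _ _ hx hy => simp [hx, hy]

/-- A family of linear maps on the homogeneous parts, given here as restrictions of maps defined on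
the whole module, glues to a single linear map. -/
theorem exists_glue {k ι M P : Type*} [CommRing k] [DecidableEq ι]
    [AddCommGroup M] [Module k M] [AddCommGroup P] [Module k P]
    {ℳ : ι → Submodule k M} (hdec : DirectSum.IsInternal ℳ) (f : ι → M →ₗ[k] P) :
    ∃ w : M →ₗ[k] P, ∀ x, ∀ m ∈ ℳ x, w m = f x m := by
  let e := LinearEquiv.ofBijective (DirectSum.coeLinearMap ℳ) hdec
  refine ⟨DirectSum.toModule k ι P (fun x => f x ∘ₗ (ℳ x).subtype) ∘ₗ e.symm.toLinearMap, ?_⟩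
  intro x m hm
  have he : e.symm m = DirectSum.lof k ι (fun i => ℳ i) x ⟨m, hm⟩ := by
    rw [LinearEquiv.symm_apply_eq]
    exact (DirectSum.coeLinearMap_lof ℳ x ⟨m, hm⟩).symm
  simp [he]

/-- The projections onto the homogeneous parts of an internal direct sum, as endomorphisms. -/
theorem exists_proj {k ι M : Type*} [CommRing k] [DecidableEq ι]
    [AddCommGroup M] [Module k M]
    {ℳ : ι → Submodule k M} (hdec : DirectSum.IsInternal ℳ) :
    ∃ p : ι → M →ₗ[k] M, (∀ x m, p x m ∈ ℳ x) ∧ (∀ x, ∀ m ∈ ℳ x, p x m = m) ∧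
      ∀ x y, y ≠ x → ∀ m ∈ ℳ y, p x m = 0 := by
  choose p hp using fun x : ι =>
    exists_glue hdec (fun y => if y = x then (LinearMap.id : M →ₗ[k] M) else 0)
  refine ⟨p, fun x m => ?_, fun x m hm => by simp [hp x x m hm],
    fun x y hy m hm => by simp [hp x y m hm, hy]⟩
  have h : (ℳ x).mkQ ∘ₗ p x = 0 := by
    refine ext_of_isInternal hdec fun y m hm => ?_
    by_cases hy : y = x
    · subst hy
      simp [hp y y m hm, hm]
    · simp [hp x y m hm, hy]
  simpa using LinearMap.congr_fun h m

/-- The projection to degree `x · g` of `m a`, for `a` of degree `g`, is `(p_x m) a`. -/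
theorem proj_smul {k G X A M : Type*} [CommRing k] [Group G] [DecidableEq X] {σ : X → G → X}
    (hσ_one : ∀ x, σ x 1 = x) (hσ_mul : ∀ x g h, σ (σ x g) h = σ x (g * h))
    [Ring A] [Algebra k A] {𝒜 : G → Submodule k A}
    [AddCommGroup M] [Module k M] {smM : M →ₗ[k] A →ₗ[k] M}
    {ℳ : X → Submodule k M} (hℳ_dec : DirectSum.IsInternal ℳ)
    (hℳ_gr : ∀ (x : X) (g : G), ∀ m ∈ ℳ x, ∀ a ∈ 𝒜 g, smM m a ∈ ℳ (σ x g))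
    {p : X → M →ₗ[k] M} (hp_self : ∀ x, ∀ m ∈ ℳ x, p x m = m)
    (hp_ne : ∀ x y, y ≠ x → ∀ m ∈ ℳ y, p x m = 0)
    (x : X) (g : G) {a : A} (ha : a ∈ 𝒜 g) (m : M) :
    p (σ x g) (smM m a) = smM (p x m) a := by
  have h : p (σ x g) ∘ₗ smM.flip a = smM.flip a ∘ₗ p x := by
    refine ext_of_isInternal hℳ_dec fun y m hm => ?_
    have hma := hℳ_gr y g m hm a ha
    by_cases hy : y = x
    · subst hy
      simp [hp_self _ _ hm, hp_self _ _ hma]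
    · have hne : σ y g ≠ σ x g := fun h => hy <| by
        simpa [hσ_mul, hσ_one] using congrArg (σ · g⁻¹) h
      simp [hp_ne _ _ hy _ hm, hp_ne _ _ hne _ hma]
  exact LinearMap.congr_fun h m

/-- The degree-preserving part `w` of an `A`-linear map `v`, acting as `p_x ∘ v` on `N_x`, is
`A`-linear. -/
theorem gradedPart_smul {k G X A M N : Type*} [CommRing k] [Group G] [DecidableEq G]
    [DecidableEq X] {σ : X → G → X}
    (hσ_one : ∀ x, σ x 1 = x) (hσ_mul : ∀ x g h, σ (σ x g) h = σ x (g * h))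
    [Ring A] [Algebra k A] {𝒜 : G → Submodule k A} (h𝒜_dec : DirectSum.IsInternal 𝒜)
    [AddCommGroup M] [Module k M] {smM : M →ₗ[k] A →ₗ[k] M}
    {ℳ : X → Submodule k M} (hℳ_dec : DirectSum.IsInternal ℳ)
    (hℳ_gr : ∀ (x : X) (g : G), ∀ m ∈ ℳ x, ∀ a ∈ 𝒜 g, smM m a ∈ ℳ (σ x g))
    [AddCommGroup N] [Module k N] {smN : N →ₗ[k] A →ₗ[k] N}
    {𝒩 : X → Submodule k N} (h𝒩_dec : DirectSum.IsInternal 𝒩)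
    (h𝒩_gr : ∀ (x : X) (g : G), ∀ n ∈ 𝒩 x, ∀ a ∈ 𝒜 g, smN n a ∈ 𝒩 (σ x g))
    {p : X → M →ₗ[k] M} (hp_self : ∀ x, ∀ m ∈ ℳ x, p x m = m)
    (hp_ne : ∀ x y, y ≠ x → ∀ m ∈ ℳ y, p x m = 0)
    {v w : N →ₗ[k] M} (hv : ∀ (n : N) (a : A), v (smN n a) = smM (v n) a)
    (hw : ∀ x, ∀ n ∈ 𝒩 x, w n = p x (v n)) (n : N) (a : A) :
    w (smN n a) = smM (w n) a := by
  have h : smN.compr₂ w = smM ∘ₗ w := by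
    refine ext_of_isInternal h𝒩_dec fun x n hn => ext_of_isInternal h𝒜_dec fun g a ha => ?_
    simp [hw _ _ hn, hw _ _ (h𝒩_gr x g n hn a ha), hv,
      proj_smul hσ_one hσ_mul hℳ_dec hℳ_gr hp_self hp_ne x g ha]
  exact LinearMap.congr_fun (LinearMap.congr_fun h n) a

/-- let `G` be a group, `X` a right `G`-set, `A` a `G`-graded `k`-algebra,
`M = ⊕_{x∈X} M_x`, `N = ⊕_{x∈X} N_x` `X`-graded right `A`-modules, and `u : M → N` a
right `A`-linear, grade-preserving map. (1) If `u` has a right `A`-linear retraction,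
then it has a right `A`-linear retraction `v` with `v(N_x) ⊆ M_x` for all `x`;
(2) if `u` has a right `A`-linear section, then it has a right `A`-linear section `v`
with `v(N_x) ⊆ M_x` for all `x`. -/
theorem graded_maschke
    {k : Type*} [CommRing k] {G : Type*} [Group G] [DecidableEq G]
    {X : Type*} [DecidableEq X] (σ : X → G → X)
    (hσ_one : ∀ x, σ x 1 = x) (hσ_mul : ∀ x g h, σ (σ x g) h = σ x (g * h))
    {A : Type*} [Ring A] [Algebra k A] (𝒜 : G → Submodule k A)
    (h𝒜_one : (1 : A) ∈ 𝒜 1)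
    (h𝒜_mul : ∀ g h : G, ∀ a ∈ 𝒜 g, ∀ b ∈ 𝒜 h, a * b ∈ 𝒜 (g * h))
    (h𝒜_dec : DirectSum.IsInternal 𝒜)
    {M : Type*} [AddCommGroup M] [Module k M] (smM : M →ₗ[k] A →ₗ[k] M)
    (hM_one : ∀ m, smM m 1 = m)
    (hM_mul : ∀ (m : M) (a b : A), smM (smM m a) b = smM m (a * b))
    (ℳ : X → Submodule k M) (hℳ_dec : DirectSum.IsInternal ℳ)
    (hℳ_gr : ∀ (x : X) (g : G), ∀ m ∈ ℳ x, ∀ a ∈ 𝒜 g, smM m a ∈ ℳ (σ x g))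
    {N : Type*} [AddCommGroup N] [Module k N] (smN : N →ₗ[k] A →ₗ[k] N)
    (hN_one : ∀ n, smN n 1 = n)
    (hN_mul : ∀ (n : N) (a b : A), smN (smN n a) b = smN n (a * b))
    (𝒩 : X → Submodule k N) (h𝒩_dec : DirectSum.IsInternal 𝒩)
    (h𝒩_gr : ∀ (x : X) (g : G), ∀ n ∈ 𝒩 x, ∀ a ∈ 𝒜 g, smN n a ∈ 𝒩 (σ x g))
    (u : M →ₗ[k] N)
    (huA : ∀ (m : M) (a : A), u (smM m a) = smN (u m) a)
    (hugr : ∀ x : X, ∀ m ∈ ℳ x, u m ∈ 𝒩 x) :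
    ((∃ v : N →ₗ[k] M, (∀ (n : N) (a : A), v (smN n a) = smM (v n) a) ∧
        v ∘ₗ u = LinearMap.id) →
      ∃ v : N →ₗ[k] M, (∀ (n : N) (a : A), v (smN n a) = smM (v n) a) ∧
        (∀ x : X, ∀ n ∈ 𝒩 x, v n ∈ ℳ x) ∧ v ∘ₗ u = LinearMap.id) ∧
    ((∃ v : N →ₗ[k] M, (∀ (n : N) (a : A), v (smN n a) = smM (v n) a) ∧
        u ∘ₗ v = LinearMap.id) →
      ∃ v : N →ₗ[k] M, (∀ (n : N) (a : A), v (smN n a) = smM (v n) a) ∧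
        (∀ x : X, ∀ n ∈ 𝒩 x, v n ∈ ℳ x) ∧ u ∘ₗ v = LinearMap.id) := by
  obtain ⟨p, hp_mem, hp_self, hp_ne⟩ := exists_proj hℳ_dec
  obtain ⟨q, -, hq_self, hq_ne⟩ := exists_proj h𝒩_dec
  have hpu : ∀ x m, u (p x m) = q x (u m) := by
    intro x m
    have h : u ∘ₗ p x = q x ∘ₗ u := by
      refine ext_of_isInternal hℳ_dec fun y m hm => ?_
      by_cases hy : y = x
      · subst hy
        simp [hp_self _ _ hm, hq_self _ _ (hugr _ _ hm)]
      · simp [hp_ne _ _ hy _ hm, hq_ne _ _ hy _ (hugr _ _ hm)]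
    exact LinearMap.congr_fun h m
  constructor
  all_goals
    rintro ⟨v, hv, hvu⟩
    obtain ⟨w, hw⟩ := exists_glue h𝒩_dec (fun x => p x ∘ₗ v)
    refine ⟨w, gradedPart_smul hσ_one hσ_mul h𝒜_dec hℳ_dec hℳ_gr h𝒩_dec h𝒩_gr hp_self hp_ne hv hw,
      fun x n hn => hw x n hn ▸ hp_mem x (v n), ?_⟩
  · refine ext_of_isInternal hℳ_dec fun x m hm => ?_
    have hvum : v (u m) = m := LinearMap.congr_fun hvu m
    simp [hw _ _ (hugr _ _ hm), hvum, hp_self _ _ hm]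
  · refine ext_of_isInternal h𝒩_dec fun x n hn => ?_
    have huvn : u (v n) = n := LinearMap.congr_fun hvu n
    simp [hw _ _ hn, hpu, huvn, hq_self _ _ hn]
end
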